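/- arXiv:math/0503588 — 3 statements merged into one kernel-verified Lean document; each statement's English description precedes it below -/
import Mathlib

section
/- Let d ≥ 2 and R > 0. For every x ∈ ℝ^d with ‖x‖ < R, the interior Poisson kernel integrates to one over the sphere: ∫_{Σ_R} (R² − ‖x‖²)/(Ω_d R ‖x − η‖^d) σ(dη) = 1. -/
open MeasureTheory

/-- The surface area `Ω_d` of the unit sphere in `ℝ^d`, i.e. the `(d-1)`-dimensional Hausdorff
measure of `{x : ‖x‖ = 1}`. -/
noncomputable def unitSphereArea (d : ℕ) : ℝ :=
  (μH[(d : ℝ) - 1] (Metric.sphere (0 : EuclideanSpace ℝ (Fin d)) 1)).toReal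

open Set Metric Filter Topology
open scoped Pointwise ENNReal NNReal

section uniq
variable {E : Type*} [NormedAddCommGroup E] [InnerProductSpace ℝ E] [FiniteDimensional ℝ E]
  [MeasurableSpace E] [BorelSpace E]

lemma ball_const (μ : Measure E) (hμ : ∀ e : E ≃ₗᵢ[ℝ] E, μ.map e = μ) {x y : E}
    (h : ‖x‖ = ‖y‖) (r : ℝ) : μ (closedBall x r) = μ (closedBall y r) := by
  set e := Submodule.reflection (ℝ ∙ (x - y))ᗮ
  have he : e x = y := Submodule.reflection_sub h
  have h1 := hμ e
  rw [← he]
  conv_rhs => rw [← h1]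
  rw [Measure.map_apply e.continuous.measurable measurableSet_closedBall]
  congr 1
  ext z
  simp [mem_closedBall]

lemma eq_smul_of_ac (ρ l : Measure E) [IsFiniteMeasure ρ] [IsFiniteMeasure l] (hac : ρ ≪ l)
    (hρ : ∀ e : E ≃ₗᵢ[ℝ] E, ρ.map e = ρ) (hl : ∀ e : E ≃ₗᵢ[ℝ] E, l.map e = l)
    (hs : ∀ᵐ x ∂l, ‖x‖ = 1) : ∃ c : ℝ≥0∞, ρ = c • l := by
  by_cases h0 : l = 0
  · subst h0
    exact ⟨0, by simpa using hac⟩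
  have : NeZero l := ⟨h0⟩
  have h := (Besicovitch.ae_tendsto_rnDeriv ρ l).and hs
  obtain ⟨x0, h1, h2⟩ := h.exists
  refine ⟨ρ.rnDeriv l x0, ?_⟩
  have hc : ρ.rnDeriv l =ᵐ[l] fun _ => ρ.rnDeriv l x0 := by
    filter_upwards [h] with x hx
    refine tendsto_nhds_unique hx.1 ?_
    have hn : ‖x‖ = ‖x0‖ := by rw [hx.2, h2]
    simpa only [ball_const ρ hρ hn, ball_const l hl hn] using h1
  conv_lhs => rw [← Measure.withDensity_rnDeriv_eq ρ l hac]
  rw [withDensity_congr_ae hc, withDensity_const]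

lemma uniq (μ ν : Measure E) [IsFiniteMeasure μ] [IsFiniteMeasure ν]
    (hμ : ∀ e : E ≃ₗᵢ[ℝ] E, μ.map e = μ) (hν : ∀ e : E ≃ₗᵢ[ℝ] E, ν.map e = ν)
    (hsμ : ∀ᵐ x ∂μ, ‖x‖ = 1) (hsν : ∀ᵐ x ∂ν, ‖x‖ = 1) : ν univ • μ = μ univ • ν := by
  have hl : ∀ e : E ≃ₗᵢ[ℝ] E, (μ + ν).map e = μ + ν := by
    intro e
    rw [Measure.map_add _ _ e.continuous.measurable, hμ, hν]
  have hs : ∀ᵐ x ∂(μ + ν), ‖x‖ = 1 := by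
    rw [ae_add_measure_iff]; exact ⟨hsμ, hsν⟩
  obtain ⟨a, ha⟩ := eq_smul_of_ac μ (μ + ν)
    (Measure.absolutelyContinuous_of_le (Measure.le_add_right le_rfl)) hμ hl hs
  obtain ⟨b, hb⟩ := eq_smul_of_ac ν (μ + ν)
    (Measure.absolutelyContinuous_of_le (Measure.le_add_left le_rfl)) hν hl hs
  generalize μ + ν = l at ha hb
  rw [ha, hb]
  simp only [Measure.smul_apply, smul_smul, smul_eq_mul]
  congr 1
  ring

lemma haus_sphere_lt_top [Nontrivial E] :
    μH[(Module.finrank ℝ E : ℝ) - 1] (sphere (0 : E) 1) < ∞ := by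
  refine (isCompact_sphere (0 : E) 1).measure_lt_top_of_nhdsWithin ?_
  intro p hp
  have hp1 : ‖p‖ = 1 := by simpa using hp
  have hp0 : p ≠ 0 := by rintro rfl; simp at hp1
  let K : Submodule ℝ E := (ℝ ∙ p)ᗮ
  have hK : (Module.finrank ℝ E : ℝ) - 1 = Module.finrank ℝ K := by
    have h1 := Submodule.finrank_add_finrank_orthogonal (ℝ ∙ p)
    rw [finrank_span_singleton hp0] at h1
    rw [← h1]; push_cast; ring
  let G : K → E := fun w => (w : E) + √(1 - ‖w‖ ^ 2) • p
  have hG : ContDiffAt ℝ 1 G 0 := by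
    have h1 : ContDiffAt ℝ 1 (fun w : K => √(1 - ‖w‖ ^ 2)) 0 := by
      apply ContDiffAt.sqrt
      · exact contDiffAt_const.sub (contDiff_norm_sq ℝ).contDiffAt
      · simp
    exact (K.subtypeL.contDiff.contDiffAt).add (h1.smul contDiffAt_const)
  obtain ⟨C, t, ht, hL⟩ := hG.exists_lipschitzOnWith
  let t' := t ∩ closedBall 0 1
  have ht' : t' ∈ 𝓝 (0 : K) := inter_mem ht (closedBall_mem_nhds _ one_pos)
  have hfin : μH[(Module.finrank ℝ E : ℝ) - 1] (G '' t') < ∞ := by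
    rw [hK]
    refine ((hL.mono inter_subset_left).hausdorffMeasure_image_le (by positivity)).trans_lt ?_
    refine ENNReal.mul_lt_top ?_ ?_
    · exact ENNReal.rpow_lt_top_of_nonneg (by positivity) (by simp)
    · exact (measure_mono inter_subset_right).trans_lt
        (isCompact_closedBall (0 : K) 1).measure_lt_top
  refine ⟨G '' t', ?_, hfin⟩
  let P := K.orthogonalProjectionOnto
  have hPp : P p = 0 := by
    apply Submodule.orthogonalProjectionOnto_eq_zero_iff.2
    rw [Submodule.mem_orthogonal]
    intro u hu
    exact (Submodule.mem_orthogonal' _ _).1 hu p (Submodule.mem_span_singleton_self p)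
  have hc1 : ∀ᶠ y in 𝓝[sphere 0 1] p, P y ∈ t' := by
    apply mem_nhdsWithin_of_mem_nhds
    apply P.continuous.continuousAt.preimage_mem_nhds
    rw [hPp]; exact ht'
  have hc2 : ∀ᶠ y in 𝓝[sphere 0 1] p, 0 < inner ℝ p y := by
    apply mem_nhdsWithin_of_mem_nhds
    have : ContinuousAt (fun y : E => inner ℝ p y) p := by fun_prop
    apply this.eventually (lt_mem_nhds _)
    simp [hp1]
  filter_upwards [hc1, hc2, self_mem_nhdsWithin] with y h1 h2 h3
  refine ⟨P y, h1, ?_⟩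
  have h4 : (P y : E) = y - inner ℝ p y • p := by
    have := Submodule.starProjection_orthogonal_val (K := ℝ ∙ p) y
    rw [Submodule.starProjection_unit_singleton ℝ hp1] at this
    exact this
  have hy1 : ‖y‖ = 1 := by simpa using h3
  have h5 : ‖P y‖ ^ 2 = 1 - (inner ℝ p y) ^ 2 := by
    rw [show ‖P y‖ = ‖(P y : E)‖ from rfl, h4, norm_sub_sq_real, norm_smul, hy1, hp1, inner_smul_right,
      real_inner_comm]
    simp
    ring
  simp only [G]
  rw [h5, h4]
  have : √(1 - (1 - (inner ℝ p y) ^ 2)) = inner ℝ p y := by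
    rw [sub_sub_cancel]; exact Real.sqrt_sq h2.le
  rw [this]; simp

lemma haus_sphere_pos [Nontrivial E] :
    μH[(Module.finrank ℝ E : ℝ) - 1] (sphere (0 : E) 1) ≠ 0 := by
  obtain ⟨p, hp1⟩ := exists_norm_eq E zero_le_one
  have hp0 : p ≠ 0 := by rintro rfl; simp at hp1
  let K : Submodule ℝ E := (ℝ ∙ p)ᗮ
  have hK : (Module.finrank ℝ E : ℝ) - 1 = Module.finrank ℝ K := by
    have h1 := Submodule.finrank_add_finrank_orthogonal (ℝ ∙ p)
    rw [finrank_span_singleton hp0] at h1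
    rw [← h1]; push_cast; ring
  rw [hK]
  have h := hausdorffMeasure_orthogonalProjectionOnto_le K (Module.finrank ℝ K : ℝ)
    (sphere (0 : E) 1) (by positivity)
  have h2 : ball (0 : K) 1 ⊆ K.orthogonalProjectionOnto '' sphere (0 : E) 1 := by
    intro w hw
    have hw1 : ‖w‖ < 1 := by simpa using hw
    have hwp : inner ℝ (w : E) p = 0 :=
      (Submodule.mem_orthogonal' _ _).1 w.2 p (Submodule.mem_span_singleton_self p)
    have hnn : 0 ≤ 1 - ‖w‖ ^ 2 := by nlinarith [norm_nonneg w]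
    refine ⟨(w : E) + √(1 - ‖w‖ ^ 2) • p, ?_, ?_⟩
    · rw [mem_sphere_zero_iff_norm]
      have : ‖(w : E) + √(1 - ‖w‖ ^ 2) • p‖ ^ 2 = 1 := by
        rw [norm_add_sq_real, inner_smul_right, hwp, norm_smul, hp1, Real.norm_eq_abs, mul_one,
          sq_abs, Real.sq_sqrt hnn]
        simp
      nlinarith [norm_nonneg ((w : E) + √(1 - ‖w‖ ^ 2) • p)]
    · have hPp : K.orthogonalProjectionOnto p = 0 := by
        apply Submodule.orthogonalProjectionOnto_eq_zero_iff.2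
        rw [Submodule.mem_orthogonal]
        intro u hu
        exact (Submodule.mem_orthogonal' _ _).1 hu p (Submodule.mem_span_singleton_self p)
      rw [map_add, map_smul, hPp]; simp
  have h3 : 0 < (μH[Module.finrank ℝ K] : Measure K) (ball (0 : K) 1) :=
    measure_ball_pos _ _ one_pos
  exact (h3.trans_le ((measure_mono h2).trans h)).ne.symm

/-- surface measure as a measure on `E`. -/
noncomputable def surf (E : Type*) [NormedAddCommGroup E] [InnerProductSpace ℝ E] [FiniteDimensional ℝ E]
  [MeasurableSpace E] [BorelSpace E] : Measure E :=
  (volume : Measure E).toSphere.map Subtype.val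

instance : IsFiniteMeasure (surf E) := by unfold surf; infer_instance

lemma surf_inv (e : E ≃ₗᵢ[ℝ] E) : (surf E).map e = surf E := by
  have key : ∀ A : Set E, MeasurableSet A → surf E A =
      Module.finrank ℝ E * volume (Ioo (0 : ℝ) 1 • (sphere (0 : E) 1 ∩ A)) := by
    intro A hA
    rw [surf, Measure.map_apply measurable_subtype_coe hA,
      Measure.toSphere_apply' _ (measurable_subtype_coe hA), Subtype.image_preimage_coe]
  ext A hA
  rw [Measure.map_apply e.continuous.measurable hA, key _ hA,
    key _ (e.continuous.measurable hA)]
  congr 1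
  have : Ioo (0 : ℝ) 1 • (sphere (0 : E) 1 ∩ e ⁻¹' A)
      = e ⁻¹' (Ioo (0 : ℝ) 1 • (sphere (0 : E) 1 ∩ A)) := by
    ext z
    simp only [Set.mem_smul, mem_preimage, mem_inter_iff, mem_sphere_zero_iff_norm]
    constructor
    · rintro ⟨r, hr, y, ⟨hy, hy'⟩, rfl⟩
      exact ⟨r, hr, e y, ⟨by simpa using hy, hy'⟩, by simp⟩
    · rintro ⟨r, hr, y, ⟨hy, hy'⟩, h⟩
      refine ⟨r, hr, e.symm y, ⟨by simpa using hy, by simpa using hy'⟩, ?_⟩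
      apply e.injective
      simp [h]
  rw [this]
  exact e.measurePreserving.measure_preimage_emb e.toHomeomorph.measurableEmbedding _

lemma surf_sphere : ∀ᵐ x ∂(surf E), ‖x‖ = 1 := by
  rw [surf, ae_map_iff (by fun_prop) (measurableSet_eq_fun (by fun_prop) (by fun_prop))]
  exact Eventually.of_forall fun x => by simp

lemma surf_ne_zero [Nontrivial E] : surf E univ ≠ 0 := by
  rw [surf, Measure.map_apply measurable_subtype_coe MeasurableSet.univ, preimage_univ]
  rw [Ne, Measure.measure_univ_eq_zero]
  exact Measure.toSphere_ne_zero _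
end uniq

section polar
variable {E : Type*} [NormedAddCommGroup E] [InnerProductSpace ℝ E] [FiniteDimensional ℝ E]
  [MeasurableSpace E] [BorelSpace E]

/-- radial measure -/
noncomputable def rad (n : ℕ) : Measure ℝ :=
  ((volume : Measure ℝ).restrict (Ioi 0)).withDensity fun r => ENNReal.ofReal (r ^ n)

lemma rad_eq (n : ℕ) : (Measure.volumeIoiPow n).map Subtype.val = rad n := by
  ext s hs
  rw [Measure.map_apply measurable_subtype_coe hs, Measure.volumeIoiPow, rad,
    withDensity_apply _ (measurable_subtype_coe hs), withDensity_apply _ hs,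
    setLIntegral_subtype measurableSet_Ioi _ fun a : ℝ ↦ .ofReal (a ^ n),
    Subtype.image_preimage_coe, Measure.restrict_restrict hs, inter_comm]

instance (n : ℕ) : SFinite (rad n) := by unfold rad; infer_instance

lemma integral_rad (n : ℕ) (f : ℝ → ℝ) :
    ∫ r, f r ∂(rad n) = ∫ r in Ioi 0, r ^ n * f r := by
  rw [rad, integral_withDensity_eq_integral_toReal_smul (by fun_prop) (by simp)]
  refine setIntegral_congr_fun measurableSet_Ioi fun r hr => ?_
  have : (0 : ℝ) < r := hr
  simp [ENNReal.toReal_ofReal (pow_nonneg this.le n)]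

lemma polar_mp [Nontrivial E] : MeasurePreserving (fun q : E × ℝ => q.2 • q.1)
    ((surf E).prod (rad (Module.finrank ℝ E - 1))) (volume : Measure E) := by
  refine ⟨by fun_prop, ?_⟩
  rw [← rad_eq, surf, Measure.map_prod_map _ _ measurable_subtype_coe measurable_subtype_coe,
    Measure.map_map (by fun_prop) (by fun_prop)]
  have h := ((volume : Measure E).measurePreserving_homeomorphUnitSphereProd).map_eq
  rw [← h, Measure.map_map (by fun_prop) (Homeomorph.measurable _)]
  have h2 : ((fun q : E × ℝ => q.2 • q.1) ∘
      Prod.map (Subtype.val : sphere (0 : E) 1 → E) (Subtype.val : Ioi (0 : ℝ) → ℝ)) ∘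
      (homeomorphUnitSphereProd E) = Subtype.val := by
    ext z
    have hz : (z : E) ≠ 0 := z.2
    simp [hz]
  rw [h2, (MeasurableEmbedding.subtype_coe (measurableSet_singleton _).compl).map_comap, Subtype.range_coe]
  exact restrict_compl_singleton _

lemma polar1 [Nontrivial E] {g : E → ℝ} (hg : Integrable g) :
    ∫ y, g y = ∫ ω, (∫ r in Ioi (0 : ℝ), r ^ (Module.finrank ℝ E - 1) * g (r • ω)) ∂(surf E) := by
  have h := polar_mp (E := E)
  have hi : Integrable (fun q : E × ℝ => g (q.2 • q.1)) _ := (h.integrable_comp hg.aestronglyMeasurable).2 hg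
  rw [← h.map_eq, integral_map h.measurable.aemeasurable (by rw [h.map_eq]; exact hg.1),
    integral_prod _ hi]
  simp only [integral_rad]

lemma polar2 [Nontrivial E] {g : E → ℝ} (hg : Integrable g) :
    ∫ y, g y = ∫ r in Ioi (0 : ℝ), r ^ (Module.finrank ℝ E - 1) * ∫ ω, g (r • ω) ∂(surf E) := by
  have h := polar_mp (E := E)
  have hi : Integrable (fun q : E × ℝ => g (q.2 • q.1)) _ := (h.integrable_comp hg.aestronglyMeasurable).2 hg
  rw [← h.map_eq, integral_map h.measurable.aemeasurable (by rw [h.map_eq]; exact hg.1),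
    integral_prod_symm _ hi]
  simp only [integral_rad]

lemma surf_restrict : (surf E).restrict (sphere 0 1) = surf E := by
  apply Measure.restrict_eq_self_of_ae_mem
  filter_upwards [surf_sphere (E := E)] with x hx
  simpa using hx

lemma surf_integrable {f : E → ℝ} (hf : ContinuousOn f (sphere 0 1)) : Integrable f (surf E) := by
  rw [← surf_restrict]
  exact hf.integrableOn_compact (isCompact_sphere _ _)

lemma surf_odd {f : E → ℝ} (hf : ∀ x, f (-x) = - f x) : ∫ ω, f ω ∂(surf E) = 0 := by
  have h := surf_inv (LinearIsometryEquiv.neg ℝ : E ≃ₗᵢ[ℝ] E)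
  have h2 : ∫ ω, f ω ∂(surf E) = ∫ ω, f (-ω) ∂(surf E) := by
    conv_lhs => rw [← h]
    exact (LinearIsometryEquiv.neg ℝ : E ≃ₗᵢ[ℝ] E).toHomeomorph.measurableEmbedding.integral_map f
  simp only [hf, integral_neg] at h2
  linarith

/-- kernel -/
noncomputable def pker (x y : E) : ℝ := (‖y‖ ^ 2 - ‖x‖ ^ 2) / ‖x - y‖ ^ (Module.finrank ℝ E)

lemma inner_calc [Nontrivial E] (x ω : E) (hω : ‖ω‖ = 1) (a b : ℝ) (ha : ‖x‖ < a) (hab : a ≤ b) :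
    ∫ r in Ioi (0 : ℝ), r ^ (Module.finrank ℝ E - 1) *
      ({y : E | a ≤ ‖y‖ ∧ ‖y‖ ≤ b}.indicator (pker x) (x + r • ω)) =
    (b ^ 2 - a ^ 2) / 2 + inner ℝ x ω *
      (√(b ^ 2 - ‖x‖ ^ 2 + inner ℝ x ω ^ 2) - √(a ^ 2 - ‖x‖ ^ 2 + inner ℝ x ω ^ 2)) := by
  set t := inner ℝ x ω with ht
  have hx0 := norm_nonneg x
  set A := √(a ^ 2 - ‖x‖ ^ 2 + t ^ 2) with hA
  set B := √(b ^ 2 - ‖x‖ ^ 2 + t ^ 2) with hB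
  have hA2 : A ^ 2 = a ^ 2 - ‖x‖ ^ 2 + t ^ 2 := Real.sq_sqrt (by nlinarith)
  have hB2 : B ^ 2 = b ^ 2 - ‖x‖ ^ 2 + t ^ 2 := Real.sq_sqrt (by nlinarith)
  have hA0 : 0 ≤ A := Real.sqrt_nonneg _
  have hB0 : 0 ≤ B := Real.sqrt_nonneg _
  have hAB : A ≤ B := Real.sqrt_le_sqrt (by nlinarith)
  have hAt : |t| < A := by
    apply abs_lt_of_sq_lt_sq _ hA0
    nlinarith
  have hAt' := abs_lt.1 hAt
  have hn : ∀ r : ℝ, ‖x + r • ω‖ ^ 2 = ‖x‖ ^ 2 + 2 * r * t + r ^ 2 := by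
    intro r
    rw [norm_add_sq_real, inner_smul_right, norm_smul, hω, mul_one, Real.norm_eq_abs, sq_abs]
    ring
  have hd : Module.finrank ℝ E ≠ 0 := Module.finrank_pos.ne'
  have h1 : ∀ r ∈ Ioi (0 : ℝ), r ^ (Module.finrank ℝ E - 1) *
      ({y : E | a ≤ ‖y‖ ∧ ‖y‖ ≤ b}.indicator (pker x) (x + r • ω)) =
      (Icc (A - t) (B - t)).indicator (fun r => r + 2 * t) r := by
    intro r hr
    have hr : 0 < r := hr
    have hiff : (a ≤ ‖x + r • ω‖ ∧ ‖x + r • ω‖ ≤ b) ↔ r ∈ Icc (A - t) (B - t) := by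
      rw [mem_Icc]
      have e1 : a ≤ ‖x + r • ω‖ ↔ A ^ 2 ≤ (r + t) ^ 2 := by
        rw [← sq_le_sq₀ (by linarith) (norm_nonneg _), hn, hA2]
        constructor <;> intro h <;> nlinarith
      have e2 : ‖x + r • ω‖ ≤ b ↔ (r + t) ^ 2 ≤ B ^ 2 := by
        rw [← sq_le_sq₀ (norm_nonneg _) (by linarith), hn, hB2]
        constructor <;> intro h <;> nlinarith
      rw [e1, e2]
      constructor
      · rintro ⟨h, h'⟩
        have u1 := abs_le_of_sq_le_sq' h' hB0
        refine ⟨?_, by linarith⟩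
        rcases le_total 0 (r + t) with h0 | h0
        · have := (sq_le_sq₀ hA0 h0).1 h
          linarith
        · nlinarith
      · rintro ⟨h, h'⟩
        constructor
        · rw [sq_le_sq₀ hA0 (by linarith)]; linarith
        · rw [sq_le_sq₀ (by linarith) hB0]; linarith
    by_cases hm : r ∈ Icc (A - t) (B - t)
    · rw [indicator_of_mem hm, indicator_of_mem (show x + r • ω ∈ {y : E | a ≤ ‖y‖ ∧ ‖y‖ ≤ b} from
        hiff.2 hm), pker, hn]
      have : ‖x - (x + r • ω)‖ = r := by
        rw [sub_add_cancel_left, norm_neg, norm_smul, hω, mul_one, Real.norm_eq_abs, abs_of_pos hr]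
      rw [this]
      obtain ⟨k, hk⟩ := Nat.exists_eq_succ_of_ne_zero hd
      rw [hk]
      simp only [Nat.succ_eq_add_one, Nat.add_sub_cancel]
      field_simp
      ring
    · rw [indicator_of_notMem hm, indicator_of_notMem, mul_zero]
      exact fun h => hm (hiff.1 h)
  rw [setIntegral_congr_fun measurableSet_Ioi h1, setIntegral_indicator measurableSet_Icc]
  have h2 : Ioi (0 : ℝ) ∩ Icc (A - t) (B - t) = Icc (A - t) (B - t) := by
    apply inter_eq_right.2
    intro r hr
    have := hr.1
    exact mem_Ioi.2 (by linarith)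
  rw [h2, integral_Icc_eq_integral_Ioc, ← intervalIntegral.integral_of_le (by linarith),
    intervalIntegral.integral_add (by simp) (by simp), integral_id, intervalIntegral.integral_const,
    smul_eq_mul]
  linear_combination (hB2 - hA2) / 2

lemma shell [Nontrivial E] (x : E) (a b : ℝ) (ha : ‖x‖ < a) (hab : a ≤ b) :
    ∫ r in a..b, r ^ (Module.finrank ℝ E - 1) * ∫ ω, pker x (r • ω) ∂(surf E) =
      (surf E).real univ * ((b ^ 2 - a ^ 2) / 2) := by
  set D : Set E := {y : E | a ≤ ‖y‖ ∧ ‖y‖ ≤ b} with hD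
  have ha0 : 0 < a := (norm_nonneg x).trans_lt ha
  have hDc : IsClosed D := (isClosed_le continuous_const continuous_norm).inter
    (isClosed_le continuous_norm continuous_const)
  have hDk : IsCompact D := (isCompact_closedBall (0 : E) b).of_isClosed_subset hDc
    (fun y hy => by simpa using hy.2)
  have hg : Integrable (D.indicator (pker x)) := by
    rw [integrable_indicator_iff hDc.measurableSet]
    refine ContinuousOn.integrableOn_compact hDk ?_
    unfold pker
    refine ContinuousOn.div (by fun_prop) (by fun_prop) ?_
    intro y hy
    have : x - y ≠ 0 := by
      intro h
      rw [sub_eq_zero.1 h] at ha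
      exact absurd hy.1 (not_le.2 ha)
    exact pow_ne_zero _ (norm_ne_zero_iff.2 this)
  have h1 := polar2 hg
  have h2 := polar1 (hg.comp_add_left x)
  rw [integral_add_left_eq_self (μ := volume) (D.indicator (pker x)) x, h1] at h2
  have h3 : ∫ r in Ioi (0 : ℝ), r ^ (Module.finrank ℝ E - 1) *
      ∫ ω, D.indicator (pker x) (r • ω) ∂(surf E) =
      ∫ r in a..b, r ^ (Module.finrank ℝ E - 1) * ∫ ω, pker x (r • ω) ∂(surf E) := by
    rw [intervalIntegral.integral_of_le hab, ← integral_Icc_eq_integral_Ioc]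
    have : Icc a b = Ioi 0 ∩ Icc a b := by
      symm
      exact inter_eq_right.2 fun r hr => mem_Ioi.2 (ha0.trans_le hr.1)
    rw [this, ← setIntegral_indicator measurableSet_Icc]
    refine setIntegral_congr_fun measurableSet_Ioi fun r hr => ?_
    have hr : 0 < r := hr
    have hnorm : ∀ ω : E, ‖ω‖ = 1 → ‖r • ω‖ = r := fun ω h => by
      rw [norm_smul, h, mul_one, Real.norm_eq_abs, abs_of_pos hr]
    by_cases hm : r ∈ Icc a b
    · simp only [indicator_of_mem hm]
      congr 1
      apply integral_congr_ae
      filter_upwards [surf_sphere (E := E)] with ω hω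
      rw [indicator_of_mem]
      simp only [hD, mem_ofPred_eq, hnorm ω hω]
      exact hm
    · simp only [indicator_of_notMem hm]
      rw [mul_eq_zero]; right
      rw [← integral_zero E ℝ (μ := surf E)]
      apply integral_congr_ae
      filter_upwards [surf_sphere (E := E)] with ω hω
      rw [indicator_of_notMem]
      simp only [hD, mem_ofPred_eq, hnorm ω hω]
      exact hm
  rw [← h3, h2]
  have h4 : ∫ ω, (∫ r in Ioi (0 : ℝ), r ^ (Module.finrank ℝ E - 1) *
      D.indicator (pker x) (x + r • ω)) ∂(surf E) = ∫ ω, ((b ^ 2 - a ^ 2) / 2 + inner ℝ x ω *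
      (√(b ^ 2 - ‖x‖ ^ 2 + inner ℝ x ω ^ 2) - √(a ^ 2 - ‖x‖ ^ 2 + inner ℝ x ω ^ 2))) ∂(surf E) := by
    apply integral_congr_ae
    filter_upwards [surf_sphere (E := E)] with ω hω
    exact inner_calc x ω hω a b ha hab
  rw [h4, integral_add (integrable_const _) (surf_integrable (by fun_prop)),
    surf_odd (f := fun ω => inner ℝ x ω *
      (√(b ^ 2 - ‖x‖ ^ 2 + inner ℝ x ω ^ 2) - √(a ^ 2 - ‖x‖ ^ 2 + inner ℝ x ω ^ 2)))]
  · simp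
  · intro y
    simp

lemma ker_integral [Nontrivial E] (x : E) (R : ℝ) (hR : ‖x‖ < R) :
    R ^ (Module.finrank ℝ E - 1) * ∫ ω, pker x (R • ω) ∂(surf E) = (surf E).real univ * R := by
  set Φ : ℝ → ℝ := fun r => r ^ (Module.finrank ℝ E - 1) * ∫ ω, pker x (r • ω) ∂(surf E) with hΦ
  have hc : ContinuousOn Φ (Ioi ‖x‖) := by
    refine ContinuousOn.mul (by fun_prop) ?_
    rw [continuousOn_iff_continuous_domRestrict]
    have h1 : (Ioi ‖x‖).domRestrict (fun r => ∫ ω, pker x (r • ω) ∂(surf E)) = fun r : Ioi ‖x‖ =>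
        ∫ ω in univ, pker x ((r : ℝ) • (ω : E)) ∂(volume : Measure E).toSphere := by
      ext r
      simp only [domRestrict_apply, Measure.restrict_univ, surf]
      exact (MeasurableEmbedding.subtype_coe isClosed_sphere.measurableSet).integral_map _
    rw [h1]
    have : LocallyCompactSpace (Ioi ‖x‖) := isOpen_Ioi.isLocallyClosed.locallyCompactSpace
    refine continuous_parametric_integral_of_continuous
      (f := fun (r : Ioi ‖x‖) (ω : sphere (0 : E) 1) => pker x ((r : ℝ) • (ω : E))) ?_ isCompact_univ
    unfold pker
    refine Continuous.div (by fun_prop) (by fun_prop) ?_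
    rintro ⟨⟨r, hr⟩, ⟨ω, hω⟩⟩
    have hr : ‖x‖ < r := hr
    have hω : ‖ω‖ = 1 := by simpa using hω
    apply pow_ne_zero
    rw [norm_ne_zero_iff]
    intro h
    have h := sub_eq_zero.1 h
    simp only at h
    have h5 : ‖x‖ = r := by
      conv_lhs => rw [h]
      rw [norm_smul, hω, mul_one, Real.norm_eq_abs, abs_of_pos ((norm_nonneg x).trans_lt hr)]
    linarith
  set a := (‖x‖ + R) / 2 with ha
  have hxa : ‖x‖ < a := by rw [ha]; linarith
  have haR : a < R := by rw [ha]; linarith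
  have hd1 : HasDerivAt (fun b => ∫ r in a..b, Φ r) (Φ R) R := by
    apply intervalIntegral.integral_hasDerivAt_right
    · apply ContinuousOn.intervalIntegrable
      apply hc.mono
      rw [uIcc_of_le haR.le]
      exact fun r hr => mem_Ioi.2 (hxa.trans_le hr.1)
    · exact hc.stronglyMeasurableAtFilter isOpen_Ioi R hR
    · exact hc.continuousAt (Ioi_mem_nhds hR)
  have hd2 : HasDerivAt (fun b => (surf E).real univ * ((b ^ 2 - a ^ 2) / 2))
      ((surf E).real univ * R) R := by
    have := (((hasDerivAt_pow 2 R).sub_const (a ^ 2)).div_const 2).const_mul ((surf E).real univ)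
    have e : (surf E).real univ * R = (surf E).real univ * (((2 : ℕ) : ℝ) * R ^ (2 - 1) / 2) := by
      simp
    rw [e]
    exact this
  have he : (fun b => ∫ r in a..b, Φ r) =ᶠ[𝓝 R]
      (fun b => (surf E).real univ * ((b ^ 2 - a ^ 2) / 2)) := by
    filter_upwards [Ioi_mem_nhds haR] with b hb
    exact shell x a b hxa (le_of_lt hb)
  exact hd1.unique (hd2.congr_of_eventuallyEq he)

end polar

lemma haus_scale (d : ℕ) (hd : 1 ≤ d) (R : ℝ) (hR : 0 < R) :
    (μH[(d : ℝ) - 1] : Measure (EuclideanSpace ℝ (Fin d))).restrict (sphere 0 R) =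
      ENNReal.ofReal (R ^ (d - 1)) •
        ((μH[(d : ℝ) - 1] : Measure (EuclideanSpace ℝ (Fin d))).restrict (sphere 0 1)).map
          (fun y => R • y) := by
  have hd' : (0 : ℝ) ≤ (d : ℝ) - 1 := by
    have : (1 : ℝ) ≤ d := by exact_mod_cast hd
    linarith
  ext A hA
  have hm : Measurable (fun y : EuclideanSpace ℝ (Fin d) => R • y) := by fun_prop
  rw [Measure.smul_apply, Measure.map_apply hm hA, Measure.restrict_apply hA,
    Measure.restrict_apply (hm hA)]
  have h1 : A ∩ sphere 0 R = R • (((fun y : EuclideanSpace ℝ (Fin d) => R • y) ⁻¹' A) ∩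
      sphere 0 1) := by
    ext z
    rw [mem_smul_set_iff_inv_smul_mem₀ hR.ne']
    simp only [mem_inter_iff, mem_preimage, smul_inv_smul₀ hR.ne', mem_sphere_zero_iff_norm,
      norm_smul, norm_inv, Real.norm_eq_abs, abs_of_pos hR]
    rw [inv_mul_eq_one₀ hR.ne', eq_comm (a := R)]
  rw [h1, Measure.hausdorffMeasure_smul₀ hd' hR.ne', ENNReal.smul_def, smul_eq_mul, smul_eq_mul]
  congr 1
  have : ((d : ℝ) - 1) = ((d - 1 : ℕ) : ℝ) := by push_cast [hd]; ring
  rw [this, NNReal.rpow_natCast, ENNReal.ofReal, ENNReal.coe_inj]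
  ext
  simp [abs_of_pos hR, hR.le]

theorem interior_poisson_kernel_integral_eq_one
    (d : ℕ) (hd : 2 ≤ d) (R : ℝ) (hR : 0 < R)
    (x : EuclideanSpace ℝ (Fin d)) (hx : ‖x‖ < R) :
    ∫ η in Metric.sphere (0 : EuclideanSpace ℝ (Fin d)) R,
        (R ^ 2 - ‖x‖ ^ 2) / (unitSphereArea d * R * ‖x - η‖ ^ d)
      ∂(μH[(d : ℝ) - 1]) = 1 := by
  have : NeZero d := ⟨by omega⟩
  have hfr : Module.finrank ℝ (EuclideanSpace ℝ (Fin d)) = d := by simp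
  have hnt : Nontrivial (EuclideanSpace ℝ (Fin d)) := Module.nontrivial_of_finrank_pos (R := ℝ) (by rw [hfr]; omega)
  set H : Measure (EuclideanSpace ℝ (Fin d)) := (μH[(d : ℝ) - 1] : Measure (EuclideanSpace ℝ (Fin d))).restrict (sphere 0 1) with hH
  have hHu : H univ = μH[(d : ℝ) - 1] (sphere (0 : (EuclideanSpace ℝ (Fin d))) 1) := by simp [hH]
  have hfin : H univ ≠ ∞ := by
    have := (haus_sphere_lt_top (E := (EuclideanSpace ℝ (Fin d)))).ne
    rwa [hfr, ← hHu] at this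
  have hpos : H univ ≠ 0 := by
    have := haus_sphere_pos (E := (EuclideanSpace ℝ (Fin d)))
    rwa [hfr, ← hHu] at this
  have : IsFiniteMeasure H := ⟨hfin.lt_top⟩
  have hΩ : unitSphereArea d = H.real univ := by rw [measureReal_def, hHu]; rfl
  have hΩ0 : 0 < unitSphereArea d := by
    rw [hΩ, measureReal_def]; exact ENNReal.toReal_pos hpos hfin
  have hHinv : ∀ e : (EuclideanSpace ℝ (Fin d)) ≃ₗᵢ[ℝ] (EuclideanSpace ℝ (Fin d)), H.map e = H := by
    intro e
    ext A hA
    rw [Measure.map_apply e.continuous.measurable hA, hH, Measure.restrict_apply hA,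
      Measure.restrict_apply (e.continuous.measurable hA)]
    rw [← e.toIsometryEquiv.hausdorffMeasure_preimage _ (A ∩ sphere 0 1)]
    congr 1
    ext z
    simp [mem_sphere_zero_iff_norm, -mem_sphere]
  have hHs : ∀ᵐ y ∂H, ‖y‖ = 1 := by
    filter_upwards [ae_restrict_mem isClosed_sphere.measurableSet] with y hy
    simpa using hy
  have hu := uniq H (surf (EuclideanSpace ℝ (Fin d))) hHinv surf_inv hHs surf_sphere
  have hSpos : 0 < (surf (EuclideanSpace ℝ (Fin d))).real univ := by
    rw [measureReal_def]; exact ENNReal.toReal_pos surf_ne_zero (measure_ne_top _ _)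
  have hcmp : ∀ f : (EuclideanSpace ℝ (Fin d)) → ℝ, (surf (EuclideanSpace ℝ (Fin d))).real univ * ∫ y, f y ∂H
      = H.real univ * ∫ y, f y ∂(surf (EuclideanSpace ℝ (Fin d))) := by
    intro f
    have := congrArg (fun m : Measure (EuclideanSpace ℝ (Fin d)) => ∫ y, f y ∂m) hu
    simpa only [integral_smul_measure, smul_eq_mul, measureReal_def] using this
  rw [haus_scale d (by omega) R hR, integral_smul_measure,
    (show MeasurableEmbedding (fun y : EuclideanSpace ℝ (Fin d) => R • y) from
      (Homeomorph.smulOfNeZero R hR.ne').measurableEmbedding).integral_map]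
  rw [ENNReal.toReal_ofReal (by positivity), smul_eq_mul]
  have hk := ker_integral x R hx
  rw [hfr] at hk
  have h1 : ∫ y, (R ^ 2 - ‖x‖ ^ 2) / (unitSphereArea d * R * ‖x - R • y‖ ^ d) ∂(surf (EuclideanSpace ℝ (Fin d))) =
      (unitSphereArea d * R)⁻¹ * ∫ y, pker x (R • y) ∂(surf (EuclideanSpace ℝ (Fin d))) := by
    rw [← integral_const_mul]
    apply integral_congr_ae
    filter_upwards [surf_sphere (E := (EuclideanSpace ℝ (Fin d)))] with y hy
    rw [pker, hfr, norm_smul, hy, mul_one, Real.norm_eq_abs, sq_abs]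
    field_simp
  have h2 := hcmp (fun y => (R ^ 2 - ‖x‖ ^ 2) / (unitSphereArea d * R * ‖x - R • y‖ ^ d))
  rw [h1, ← hΩ] at h2
  apply mul_left_cancel₀ hSpos.ne'
  change _ * (R ^ (d - 1) * ∫ y, (R ^ 2 - ‖x‖ ^ 2) / (unitSphereArea d * R * ‖x - R • y‖ ^ d) ∂H) = _
  rw [mul_left_comm, h2, mul_one]
  calc _ = R⁻¹ * (R ^ (d - 1) * ∫ y, pker x (R • y) ∂(surf (EuclideanSpace ℝ (Fin d)))) := by field_simp
    _ = _ := by rw [hk]; field_simp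
end

section
/- Let d ≥ 3, R > 0, set D_e = {x ∈ ℝ^d : ‖x‖ > R}, and let f be a continuous real-valued function on Σ_R. Define Hf(x) = ∫_{Σ_R} (‖x‖² − R²)/(Ω_d R ‖x − η‖^d) f(η) σ(dη) for x ∈ D_e. Then Hf is harmonic on D_e, extends continuously to the closure {‖x‖ ≥ R} with boundary values Hf = f on Σ_R, and Hf(x) → 0 as ‖x‖ → ∞; moreover, Hf is the unique function with these three properties. -/
open MeasureTheory

/-- The exterior Poisson integral `Hf(x) = ∫_{Σ_R} (‖x‖² - R²)/(Ω_d R ‖x - η‖^d) f(η) σ(dη)`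
of a boundary function `f` on the sphere `Σ_R`, `σ` being the `(d-1)`-dimensional surface
(Hausdorff) measure. -/
noncomputable def extPoissonIntegral (d : ℕ) (R : ℝ) (f : EuclideanSpace ℝ (Fin d) → ℝ)
    (x : EuclideanSpace ℝ (Fin d)) : ℝ :=
  ∫ η in Metric.sphere (0 : EuclideanSpace ℝ (Fin d)) R,
    (‖x‖ ^ 2 - R ^ 2) / (unitSphereArea d * R * ‖x - η‖ ^ d) * f η ∂(μH[(d : ℝ) - 1])

/-- `g` solves the exterior Dirichlet problem on `D_e = {‖x‖ > R}` with boundary data `f`: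
it is harmonic on `D_e` (twice continuously differentiable with vanishing Laplacian),
continuous on the closure `{‖x‖ ≥ R}` with boundary values `f` on `Σ_R`, and tends to `0` as
`‖x‖ → ∞`. -/
def IsExtDirichletSolution (d : ℕ) (R : ℝ) (f g : EuclideanSpace ℝ (Fin d) → ℝ) : Prop :=
  ContDiffOn ℝ 2 g {x | R < ‖x‖} ∧
  (∀ x : EuclideanSpace ℝ (Fin d), R < ‖x‖ →
      ∑ i : Fin d,
        fderiv ℝ (fun y => fderiv ℝ g y (EuclideanSpace.single i (1 : ℝ))) x
          (EuclideanSpace.single i (1 : ℝ)) = 0) ∧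
  ContinuousOn g {x | R ≤ ‖x‖} ∧
  (∀ η : EuclideanSpace ℝ (Fin d), ‖η‖ = R → g η = f η) ∧
  Filter.Tendsto g (Filter.comap norm Filter.atTop) (nhds 0)



/-! ### Measure of the sphere -/

lemma sphere_one_finite (n : ℕ) :
    μH[(n : ℝ)] (Metric.sphere (0 : (EuclideanSpace ℝ (Fin (n+1)))) 1) < ⊤ := by
  classical
  let w : Fin (n+1) → ℝ → (Fin n → ℝ) → (EuclideanSpace ℝ (Fin (n+1))) :=
    fun i s v => WithLp.toLp 2 (i.insertNth (α := fun _ => ℝ) s v)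
  let F : Fin (n+1) → ℝ → (Fin n → ℝ) → (EuclideanSpace ℝ (Fin (n+1))) := fun i s v => (‖w i s v‖)⁻¹ • w i s v
  have hwc : ∀ i s, ContDiff ℝ 1 (w i s) := by
    intro i s
    rw [contDiff_euclidean, Fin.forall_iff_succAbove i]
    refine ⟨?_, fun j => ?_⟩
    · simp only [w, Fin.insertNth_apply_same]
      exact contDiff_const
    · simp only [w, Fin.insertNth_apply_succAbove]
      exact contDiff_apply ℝ ℝ j
  have hw0 : ∀ i s, s ≠ 0 → ∀ v, w i s v ≠ 0 := by
    intro i s hs v h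
    have := congrArg (fun x : (EuclideanSpace ℝ (Fin (n+1))) => x i) h
    simp [w] at this
    exact hs this
  have hFc : ∀ i s, s ≠ 0 → ContDiff ℝ 1 (F i s) := by
    intro i s hs
    exact (((hwc i s).norm ℝ (hw0 i s hs)).inv (fun v => norm_ne_zero_iff.2 (hw0 i s hs v))).smul
      (hwc i s)
  have hfin : ∀ i s, s ≠ 0 → μH[(n : ℝ)] (F i s '' Metric.closedBall 0 1) < ⊤ := by
    intro i s hs
    obtain ⟨K, hK⟩ := ((hFc i s hs).locallyLipschitz.locallyLipschitzOn
      (s := Metric.closedBall 0 1)).exists_lipschitzOnWith_of_compact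
      (isCompact_closedBall (0 : Fin n → ℝ) 1)
    refine (hK.hausdorffMeasure_image_le (Nat.cast_nonneg n)).trans_lt ?_
    have h1 : (μH[(n:ℝ)] : Measure (Fin n → ℝ)) = volume := by
      have := hausdorffMeasure_pi_real (ι := Fin n)
      simpa using this
    rw [h1]
    refine ENNReal.mul_lt_top ?_ (isCompact_closedBall _ _).measure_lt_top
    simp
  have hsub : Metric.sphere (0 : (EuclideanSpace ℝ (Fin (n+1)))) 1 ⊆
      ⋃ i : Fin (n+1), (F i 1 '' Metric.closedBall 0 1 ∪ F i (-1) '' Metric.closedBall 0 1) := by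
    intro x hx
    have hx1 : ‖x‖ = 1 := by simpa using hx
    obtain ⟨i, hi⟩ := Finite.exists_max (fun i => |x i|)
    have hpos : 0 < |x i| := by
      by_contra hcon
      have h0 : x = 0 := by
        ext j
        have := (hi j).trans (not_lt.1 hcon)
        simpa using abs_nonpos_iff.1 this
      rw [h0] at hx1; simp at hx1
    have key : ∀ s : ℝ, s ≠ 0 → x i = s * |x i| →
        F i s (fun j => x (i.succAbove j) / |x i|) = x := by
      intro s hs0 hs
      have hw : w i s (fun j => x (i.succAbove j) / |x i|) = |x i|⁻¹ • x := by
        ext j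
        revert j
        rw [Fin.forall_iff_succAbove i]
        refine ⟨?_, fun j => ?_⟩
        · simp only [w, Fin.insertNth_apply_same, PiLp.smul_apply, smul_eq_mul]
          nth_rewrite 2 [hs]
          field_simp
        · simp only [w, Fin.insertNth_apply_succAbove, PiLp.smul_apply, smul_eq_mul]
          field_simp
      simp only [F, hw, norm_smul, hx1, norm_inv, Real.norm_eq_abs, abs_abs, mul_one, inv_inv]
      rw [smul_smul, mul_inv_cancel₀ hpos.ne', one_smul]
    have hball : (fun j => x (i.succAbove j) / |x i|) ∈ Metric.closedBall (0 : Fin n → ℝ) 1 := by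
      rw [mem_closedBall_zero_iff, pi_norm_le_iff_of_nonneg zero_le_one]
      intro j
      rw [Real.norm_eq_abs, abs_div, abs_abs, div_le_one hpos]
      exact hi _
    refine Set.mem_iUnion.2 ⟨i, ?_⟩
    rcases le_or_gt 0 (x i) with h | h
    · exact Or.inl ⟨_, hball, key 1 one_ne_zero (by rw [abs_of_nonneg h]; ring)⟩
    · exact Or.inr ⟨_, hball, key (-1) (by norm_num) (by rw [abs_of_neg h]; ring)⟩
  refine (measure_mono hsub).trans_lt ?_
  refine (measure_iUnion_fintype_le _ _).trans_lt ?_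
  refine ENNReal.sum_lt_top.2 fun i _ => ?_
  exact (measure_union_le _ _).trans_lt
    (ENNReal.add_lt_top.2 ⟨hfin i 1 one_ne_zero, hfin i (-1) (by norm_num)⟩)

lemma sphere_one_pos (n : ℕ) :
    0 < μH[(n : ℝ)] (Metric.sphere (0 : (EuclideanSpace ℝ (Fin (n+1)))) 1) := by
  let P : (EuclideanSpace ℝ (Fin (n+1))) → (Fin n → ℝ) := fun x j => x j.succ
  have hP : LipschitzWith 1 P := by
    refine LipschitzWith.of_dist_le_mul fun x y => ?_
    rw [NNReal.coe_one, one_mul, dist_pi_le_iff dist_nonneg]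
    intro j
    rw [dist_eq_norm, dist_eq_norm]
    exact PiLp.norm_apply_le (x - y) j.succ
  have h := hP.hausdorffMeasure_image_le (Nat.cast_nonneg (α := ℝ) n) (Metric.sphere (0 : (EuclideanSpace ℝ (Fin (n+1)))) 1)
  have h1 : (μH[(n:ℝ)] : Measure (Fin n → ℝ)) = volume := by
    have := hausdorffMeasure_pi_real (ι := Fin n)
    simpa using this
  rw [h1] at h
  simp only [ENNReal.coe_one, ENNReal.one_rpow, one_mul] at h
  refine lt_of_lt_of_le ?_ h
  have hU : IsOpen {v : Fin n → ℝ | ∑ j, v j ^ 2 < 1} :=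
    isOpen_lt (by fun_prop) continuous_const
  have hne : {v : Fin n → ℝ | ∑ j, v j ^ 2 < 1}.Nonempty := ⟨0, by simp⟩
  refine (hU.measure_pos volume hne).trans_le (measure_mono ?_)
  intro v hv
  have hv' : ∑ j, v j ^ 2 < 1 := hv
  refine ⟨WithLp.toLp 2 (Fin.cons (Real.sqrt (1 - ∑ j, v j ^ 2)) v : Fin (n+1) → ℝ), ?_, ?_⟩
  · rw [mem_sphere_zero_iff_norm, EuclideanSpace.norm_eq, Real.sqrt_eq_one, Fin.sum_univ_succ]
    simp [Real.sq_sqrt (sub_nonneg.2 hv'.le)]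
  · ext j
    simp [P]

open scoped Pointwise in
lemma sphere_measure (d : ℕ) (hd : 3 ≤ d) (R : ℝ) (hR : 0 < R) :
    0 < unitSphereArea d ∧ μH[(d : ℝ) - 1] (Metric.sphere (0 : (EuclideanSpace ℝ (Fin d))) R) < ⊤ ∧
    (μH[(d : ℝ) - 1] (Metric.sphere (0 : (EuclideanSpace ℝ (Fin d))) R)).toReal = R ^ (d - 1) * unitSphereArea d := by
  obtain ⟨n, rfl⟩ : ∃ n, d = n + 1 := ⟨d - 1, by omega⟩
  have hc : ((n + 1 : ℕ) : ℝ) - 1 = n := by push_cast; ring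
  unfold unitSphereArea
  rw [hc]
  have hs : Metric.sphere (0 : (EuclideanSpace ℝ (Fin (n+1)))) R = R • Metric.sphere (0 : (EuclideanSpace ℝ (Fin (n+1)))) 1 := by
    rw [smul_sphere' hR.ne']
    simp [abs_of_pos hR]
  rw [hs, Measure.hausdorffMeasure_smul₀ (Nat.cast_nonneg n) hR.ne']
  have hf := sphere_one_finite n
  have hp := sphere_one_pos n
  refine ⟨ENNReal.toReal_pos hp.ne' hf.ne, ?_, ?_⟩
  · exact ENNReal.mul_lt_top (by simp) hf
  · rw [ENNReal.smul_def, smul_eq_mul, ENNReal.toReal_mul]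
    congr 1
    simp [abs_of_pos hR]

/-! ### Maximum principle and uniqueness -/

lemma second_deriv_nonpos {E : Type*} [NormedAddCommGroup E] [NormedSpace ℝ E]
    {u : E → ℝ} {x : E} (e : E) {U : Set E} (hU : IsOpen U) (hx : x ∈ U)
    (hu : ContDiffOn ℝ 2 u U) (hmax : IsLocalMax u x) :
    fderiv ℝ (fun y => fderiv ℝ u y e) x e ≤ 0 := by
  by_contra hcon
  push Not at hcon
  let l : ℝ → E := fun t => x + t • e
  have hl : ∀ t, HasDerivAt l e t := by
    intro t
    have := ((hasDerivAt_id t).smul_const e).const_add x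
    rw [one_smul] at this
    exact this
  have hlc : Continuous l := by fun_prop
  have hl0 : l 0 = x := by simp [l]
  have hU0 : ∀ᶠ t in nhds (0 : ℝ), l t ∈ U :=
    hlc.continuousAt.preimage_mem_nhds (by rw [hl0]; exact hU.mem_nhds hx)
  have hd1 : ∀ y ∈ U, DifferentiableAt ℝ u y := fun y hy =>
    (hu.differentiableOn (by norm_num)).differentiableAt (hU.mem_nhds hy)
  have hφ' : deriv (u ∘ l) =ᶠ[nhds 0] fun t => fderiv ℝ u (l t) e := by
    filter_upwards [hU0] with t ht
    exact ((hd1 _ ht).hasFDerivAt.comp_hasDerivAt t (hl t)).deriv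
  have hd2 : DifferentiableAt ℝ (fun y => fderiv ℝ u y e) x := by
    have h1 : ContDiffOn ℝ 1 (fderiv ℝ u) U := hu.fderiv_of_isOpen hU (by norm_num)
    exact ((h1.differentiableOn (by norm_num)).differentiableAt (hU.mem_nhds hx)).clm_apply
      (differentiableAt_const e)
  have hφ'' : deriv (deriv (u ∘ l)) 0 = fderiv ℝ (fun y => fderiv ℝ u y e) x e := by
    rw [hφ'.deriv_eq]
    have : HasFDerivAt (fun y => fderiv ℝ u y e) (fderiv ℝ (fun y => fderiv ℝ u y e) x) (l 0) := by
      rw [hl0]; exact hd2.hasFDerivAt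
    exact (this.comp_hasDerivAt 0 (hl 0)).deriv
  have hmaxφ : IsLocalMax (u ∘ l) 0 := by
    have : Filter.Tendsto l (nhds 0) (nhds x) := by
      have := hlc.tendsto 0
      rwa [hl0] at this
    have h2 := this.eventually hmax
    filter_upwards [h2] with t ht
    simpa [hl0] using ht
  have hminφ : IsLocalMin (u ∘ l) 0 := by
    apply isLocalMin_of_deriv_deriv_pos
    · rw [hφ'']; exact hcon
    · exact hmaxφ.deriv_eq_zero
    · refine ContinuousAt.comp ?_ hlc.continuousAt
      rw [hl0]
      exact (hd1 x hx).continuousAt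
  have hconst : (u ∘ l) =ᶠ[nhds 0] fun _ => (u ∘ l) 0 := by
    filter_upwards [hmaxφ, hminφ] with t h1 h2
    exact le_antisymm h1 h2
  have h3 : deriv (u ∘ l) =ᶠ[nhds 0] fun _ => 0 := by
    have := hconst.deriv
    simpa using this
  have h4 := h3.deriv_eq
  rw [hφ''] at h4
  simp at h4
  rw [h4] at hcon
  exact lt_irrefl _ hcon

/-- Weak maximum principle on the exterior domain. -/
lemma ext_max_principle (d : ℕ) (hd : 3 ≤ d) (R : ℝ) (g : (EuclideanSpace ℝ (Fin d)) → ℝ)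
    (h1 : ContDiffOn ℝ 2 g {x | R < ‖x‖})
    (h2 : ∀ x : (EuclideanSpace ℝ (Fin d)), R < ‖x‖ →
      ∑ i : Fin d,
        fderiv ℝ (fun y => fderiv ℝ g y (EuclideanSpace.single i (1 : ℝ))) x
          (EuclideanSpace.single i (1 : ℝ)) = 0)
    (h3 : ContinuousOn g {x | R ≤ ‖x‖})
    (h4 : ∀ η : (EuclideanSpace ℝ (Fin d)), ‖η‖ = R → g η = 0)
    (h5 : Filter.Tendsto g (Filter.comap norm Filter.atTop) (nhds 0))
    (x₀ : (EuclideanSpace ℝ (Fin d))) (hx₀ : R ≤ ‖x₀‖) : g x₀ ≤ 0 := by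
  by_contra hcon
  push Not at hcon
  have hU : IsOpen {x : (EuclideanSpace ℝ (Fin d)) | R < ‖x‖} := isOpen_lt continuous_const continuous_norm
  have h6 : ∀ᶠ r in Filter.atTop, ∀ x : (EuclideanSpace ℝ (Fin d)), ‖x‖ = r → g x < g x₀ / 2 := by
    have := h5.eventually (gt_mem_nhds (half_pos hcon))
    rw [Filter.eventually_comap] at this
    exact this
  obtain ⟨M, hM, hMx⟩ := (h6.and (Filter.eventually_gt_atTop (max ‖x₀‖ 0))).exists
  have hMx0 : ‖x₀‖ < M := (le_max_left _ _).trans_lt hMx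
  have hM0 : 0 < M := (le_max_right _ _).trans_lt hMx
  set ε : ℝ := g x₀ / (2 * M ^ 2) with hε
  have hεpos : 0 < ε := by positivity
  have hεM : ε * M ^ 2 = g x₀ / 2 := by rw [hε]; field_simp
  let u : (EuclideanSpace ℝ (Fin d)) → ℝ := fun x => g x + ε * ‖x‖ ^ 2
  let A : Set (EuclideanSpace ℝ (Fin d)) := {x | R ≤ ‖x‖} ∩ Metric.closedBall 0 M
  have hA : IsCompact A :=
    (isCompact_closedBall (0 : (EuclideanSpace ℝ (Fin d))) M).inter_left (isClosed_le continuous_const continuous_norm)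
  have huc : ContinuousOn u A :=
    (h3.mono Set.inter_subset_left).add (by fun_prop)
  have hx₀A : x₀ ∈ A := ⟨hx₀, by simpa using hMx0.le⟩
  obtain ⟨z, hzA, hz⟩ := hA.exists_isMaxOn ⟨x₀, hx₀A⟩ huc
  have hzx : u x₀ ≤ u z := hz hx₀A
  have hzM : ‖z‖ ≤ M := by simpa using hzA.2
  have hu0 : g x₀ ≤ u x₀ := by
    have : 0 ≤ ε * ‖x₀‖ ^ 2 := by positivity
    simp only [u]; linarith
  have hzsq : ε * ‖z‖ ^ 2 ≤ g x₀ / 2 := by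
    rw [← hεM]; gcongr
  have hzR : R < ‖z‖ := by
    refine lt_of_le_of_ne hzA.1 fun h => ?_
    have := h4 z h.symm
    simp only [u, this] at hzx hu0
    linarith
  have hzM' : ‖z‖ < M := by
    refine lt_of_le_of_ne hzM fun h => ?_
    have := hM z h
    simp only [u] at hzx hu0
    linarith
  have hloc : IsLocalMax u z := by
    have : A ∈ nhds z := by
      refine Filter.inter_mem ?_ ?_
      · exact Filter.mem_of_superset (hU.mem_nhds hzR) fun y (hy : R < ‖y‖) =>
          show R ≤ ‖y‖ from hy.le
      · exact Metric.closedBall_mem_nhds_of_mem (by simpa using hzM')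
    exact hz.isLocalMax this
  have huC : ContDiffOn ℝ 2 u {x | R < ‖x‖} :=
    h1.add (contDiff_const.mul (contDiff_norm_sq ℝ)).contDiffOn
  have hle : ∀ i : Fin d, fderiv ℝ (fun y => fderiv ℝ u y (EuclideanSpace.single i (1 : ℝ))) z
          (EuclideanSpace.single i (1 : ℝ)) ≤ 0 := fun i =>
    second_deriv_nonpos _ hU hzR huC hloc
  have heq : ∀ i : Fin d, fderiv ℝ (fun y => fderiv ℝ u y (EuclideanSpace.single i (1 : ℝ))) z
          (EuclideanSpace.single i (1 : ℝ)) =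
        fderiv ℝ (fun y => fderiv ℝ g y (EuclideanSpace.single i (1 : ℝ))) z
          (EuclideanSpace.single i (1 : ℝ)) + 2 * ε := by
    intro i
    have ha : (fun y => fderiv ℝ u y (EuclideanSpace.single i (1 : ℝ))) =ᶠ[nhds z]
        fun y => fderiv ℝ g y (EuclideanSpace.single i (1 : ℝ)) + (2 * ε) * y i := by
      filter_upwards [hU.mem_nhds hzR] with y hy
      have hg : HasFDerivAt g (fderiv ℝ g y) y :=
        ((h1.differentiableOn (by norm_num)).differentiableAt (hU.mem_nhds hy)).hasFDerivAt
      have hn : HasFDerivAt (fun x : (EuclideanSpace ℝ (Fin d)) => ‖x‖ ^ 2) (2 • (innerSL ℝ y)) y :=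
        (hasStrictFDerivAt_norm_sq y).hasFDerivAt
      have := (hg.add (hn.const_mul ε)).fderiv
      have h' : fderiv ℝ u y = fderiv ℝ g y + ε • (2 • (innerSL ℝ y)) := this
      rw [h']
      simp [EuclideanSpace.inner_single_right]
      ring
    rw [ha.fderiv_eq]
    have hd2 : DifferentiableAt ℝ (fun y => fderiv ℝ g y (EuclideanSpace.single i (1 : ℝ))) z := by
      have h1 : ContDiffOn ℝ 1 (fderiv ℝ g) {x | R < ‖x‖} := h1.fderiv_of_isOpen hU (by norm_num)
      exact ((h1.differentiableOn (by norm_num)).differentiableAt (hU.mem_nhds hzR)).clm_apply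
        (differentiableAt_const _)
    have hp : HasFDerivAt (fun y : (EuclideanSpace ℝ (Fin d)) => y i) (EuclideanSpace.proj i : (EuclideanSpace ℝ (Fin d)) →L[ℝ] ℝ) z :=
      (EuclideanSpace.proj i : (EuclideanSpace ℝ (Fin d)) →L[ℝ] ℝ).hasFDerivAt
    have := (hd2.hasFDerivAt.add (hp.const_mul (2 * ε))).fderiv
    have h' : fderiv ℝ (fun y => fderiv ℝ g y (EuclideanSpace.single i (1 : ℝ))
      + (2 * ε) * y i) z = _ := this
    rw [h']
    simp
  have hs := Finset.sum_nonpos fun i (_ : i ∈ Finset.univ) => hle i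
  simp only [heq] at hs
  rw [Finset.sum_add_distrib, h2 z hzR] at hs
  simp at hs
  have : (0 : ℝ) < d := by positivity
  nlinarith [mul_pos this hεpos]

lemma ext_le (d : ℕ) (hd : 3 ≤ d) (R : ℝ) (f g₁ g₂ : (EuclideanSpace ℝ (Fin d)) → ℝ)
    (h1 : IsExtDirichletSolution d R f g₁) (h2 : IsExtDirichletSolution d R f g₂)
    (x : (EuclideanSpace ℝ (Fin d))) (hx : R ≤ ‖x‖) : g₁ x ≤ g₂ x := by
  obtain ⟨a1, a2, a3, a4, a5⟩ := h1
  obtain ⟨b1, b2, b3, b4, b5⟩ := h2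
  have hU : IsOpen {x : (EuclideanSpace ℝ (Fin d)) | R < ‖x‖} := isOpen_lt continuous_const continuous_norm
  have := ext_max_principle d hd R (fun x => g₁ x - g₂ x) (a1.sub b1) ?_ (a3.sub b3)
    (fun η hη => by rw [a4 η hη, b4 η hη, sub_self]) (by simpa using a5.sub b5) x hx
  · simpa using this
  · intro z hz
    have heq : ∀ i : Fin d, fderiv ℝ (fun y => fderiv ℝ (fun x => g₁ x - g₂ x) y
          (EuclideanSpace.single i (1 : ℝ))) z (EuclideanSpace.single i (1 : ℝ)) =
        fderiv ℝ (fun y => fderiv ℝ g₁ y (EuclideanSpace.single i (1 : ℝ))) z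
          (EuclideanSpace.single i (1 : ℝ)) -
        fderiv ℝ (fun y => fderiv ℝ g₂ y (EuclideanSpace.single i (1 : ℝ))) z
          (EuclideanSpace.single i (1 : ℝ)) := by
      intro i
      have hdd : ∀ g : (EuclideanSpace ℝ (Fin d)) → ℝ, ContDiffOn ℝ 2 g {x | R < ‖x‖} → 
          DifferentiableAt ℝ (fun y => fderiv ℝ g y (EuclideanSpace.single i (1 : ℝ))) z := by
        intro g hg
        have h1 : ContDiffOn ℝ 1 (fderiv ℝ g) {x | R < ‖x‖} := hg.fderiv_of_isOpen hU (by norm_num)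
        exact ((h1.differentiableOn (by norm_num)).differentiableAt (hU.mem_nhds hz)).clm_apply
          (differentiableAt_const _)
      have ha : (fun y => fderiv ℝ (fun x => g₁ x - g₂ x) y (EuclideanSpace.single i (1 : ℝ)))
          =ᶠ[nhds z] fun y => fderiv ℝ g₁ y (EuclideanSpace.single i (1 : ℝ)) -
            fderiv ℝ g₂ y (EuclideanSpace.single i (1 : ℝ)) := by
        filter_upwards [hU.mem_nhds hz] with y hy
        rw [fderiv_fun_sub ((a1.differentiableOn (by norm_num)).differentiableAt (hU.mem_nhds hy))
          ((b1.differentiableOn (by norm_num)).differentiableAt (hU.mem_nhds hy))]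
        simp
      rw [ha.fderiv_eq, fderiv_fun_sub (hdd _ a1) (hdd _ b1)]
      simp
    simp only [heq]
    rw [Finset.sum_sub_distrib, a2 z hz, b2 z hz, sub_zero]

lemma ext_unique (d : ℕ) (hd : 3 ≤ d) (R : ℝ) (f g₁ g₂ : (EuclideanSpace ℝ (Fin d)) → ℝ)
    (h1 : IsExtDirichletSolution d R f g₁) (h2 : IsExtDirichletSolution d R f g₂)
    (x : (EuclideanSpace ℝ (Fin d))) (hx : R ≤ ‖x‖) : g₁ x = g₂ x :=
  le_antisymm (ext_le d hd R f g₁ g₂ h1 h2 x hx) (ext_le d hd R f g₂ g₁ h2 h1 x hx)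

/-! ### Differentiation under the integral sign -/

section Param

set_option linter.unusedSectionVars false

variable {E : Type*} [NormedAddCommGroup E] [NormedSpace ℝ E] [FiniteDimensional ℝ E]
  [MeasurableSpace E] [BorelSpace E]
  {F : Type*} [NormedAddCommGroup F] [NormedSpace ℝ F]

/-- partial derivative with respect to the first variable -/
noncomputable def pd1 (k : E × E → F) (p : E × E) : E →L[ℝ] F :=
  (fderiv ℝ k p).comp (ContinuousLinearMap.inl ℝ E E)

lemma pd1_hasFDerivAt {k : E × E → F} {x η : E} (h : DifferentiableAt ℝ k (x, η)) :
    HasFDerivAt (fun y => k (y, η)) (pd1 k (x, η)) x :=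
  h.hasFDerivAt.comp x (hasFDerivAt_prodMk_left x η)

lemma pd1_contDiffOn {k : E × E → F} {W : Set (E × E)} (hW : IsOpen W) {n m : ℕ}
    (hk : ContDiffOn ℝ m k W) (hnm : n + 1 ≤ m) : ContDiffOn ℝ n (pd1 k) W :=
  (hk.fderiv_of_isOpen hW (by exact_mod_cast hnm)).clm_comp contDiffOn_const

lemma param_tube {W : Set (E × E)} (hW : IsOpen W) {S : Set E} (hS : IsCompact S)
    {x₀ : E} (hx₀ : ∀ η ∈ S, (x₀, η) ∈ W) :
    ∃ δ > 0, Metric.closedBall x₀ δ ×ˢ S ⊆ W := by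
  obtain ⟨u, v, hu, hv, hxu, hSv, huv⟩ := generalized_tube_lemma (isCompact_singleton (x := x₀)) hS hW
    (by rintro ⟨a, b⟩ ⟨ha, hb⟩; obtain rfl : a = x₀ := ha; exact hx₀ b hb)
  obtain ⟨δ, hδ, hball⟩ := Metric.nhds_basis_closedBall.mem_iff.1
    (hu.mem_nhds (hxu (Set.mem_singleton x₀)))
  exact ⟨δ, hδ, (Set.prod_mono hball hSv).trans huv⟩

lemma param_integrable {S : Set E} (hS : IsCompact S) {μ : Measure E} (hμ : μ S < ⊤)
    {h : E → F} (hh : ContinuousOn h S) : IntegrableOn h S μ := by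
  obtain ⟨C, hC⟩ := hS.exists_bound_of_continuousOn hh
  have : IsFiniteMeasure (μ.restrict S) := ⟨by simpa using hμ⟩
  refine Integrable.of_bound (C := C) ?_ ?_
  · exact hh.aestronglyMeasurable_of_isCompact hS hS.measurableSet
  · exact (ae_restrict_iff' hS.measurableSet).2 (Filter.Eventually.of_forall hC)

lemma param_section_cont {k : E × E → F} {W : Set (E × E)} (hk : ContinuousOn k W)
    {S : Set E} {x : E} (hx : ∀ η ∈ S, (x, η) ∈ W) {f : E → ℝ} (hf : ContinuousOn f S) :
    ContinuousOn (fun η => f η • k (x, η)) S :=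
  hf.smul (hk.comp (by fun_prop) fun η hη => hx η hη)

lemma param_hasFDerivAt {k : E × E → F} {W : Set (E × E)} (hW : IsOpen W)
    (hk : ContDiffOn ℝ 1 k W) {S : Set E} (hS : IsCompact S) {μ : Measure E} (hμ : μ S < ⊤)
    {f : E → ℝ} (hf : ContinuousOn f S) {x₀ : E} (hx₀ : ∀ η ∈ S, (x₀, η) ∈ W) :
    HasFDerivAt (fun x => ∫ η in S, f η • k (x, η) ∂μ)
      (∫ η in S, f η • pd1 k (x₀, η) ∂μ) x₀ := by
  obtain ⟨δ, hδ, hsub⟩ := param_tube hW hS hx₀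
  have hpd : ContinuousOn (pd1 k) W :=
    (pd1_contDiffOn (n := 0) (m := 1) hW (by exact_mod_cast hk) (by norm_num)).continuousOn
  have hin : ∀ x ∈ Metric.closedBall x₀ δ, ∀ η ∈ S, (x, η) ∈ W := fun x hx η hη => hsub ⟨hx, hη⟩
  obtain ⟨C, hC⟩ := ((isCompact_closedBall x₀ δ).prod hS).exists_bound_of_continuousOn
    (f := fun p : E × E => f p.2 • pd1 k p)
    ((hf.comp continuousOn_snd fun p hp => hp.2).smul (hpd.mono hsub))
  refine hasFDerivAt_integral_of_dominated_of_fderiv_le (bound := fun _ => C)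
    (F' := fun x η => f η • pd1 k (x, η))
    (Metric.closedBall_mem_nhds x₀ hδ) ?_ ?_ ?_ ?_ ?_ ?_
  · filter_upwards [Metric.closedBall_mem_nhds x₀ hδ] with x hx
    exact (param_integrable hS hμ
      (param_section_cont hk.continuousOn (hin x hx) hf)).aestronglyMeasurable
  · exact param_integrable hS hμ (param_section_cont hk.continuousOn hx₀ hf)
  · exact (param_integrable hS hμ (param_section_cont hpd hx₀ hf)).aestronglyMeasurable
  · refine (ae_restrict_iff' hS.measurableSet).2 (Filter.Eventually.of_forall fun η hη x hx => ?_)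
    exact hC (x, η) ⟨hx, hη⟩
  · have : IsFiniteMeasure (μ.restrict S) := ⟨by simpa using hμ⟩
    exact integrable_const C
  · refine (ae_restrict_iff' hS.measurableSet).2 (Filter.Eventually.of_forall fun η hη x hx => ?_)
    have hxW := hin x hx η hη
    exact (pd1_hasFDerivAt ((hk.differentiableOn (by norm_num)).differentiableAt
      (hW.mem_nhds hxW))).const_smul (f η)

lemma param_main {k : E × E → ℝ} {W : Set (E × E)} (hW : IsOpen W)
    (hk : ContDiffOn ℝ 3 k W) {S : Set E} (hS : IsCompact S) {μ : Measure E} (hμ : μ S < ⊤)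
    {f : E → ℝ} (hf : ContinuousOn f S) {U : Set E} (hU : IsOpen U)
    (hUW : ∀ x ∈ U, ∀ η ∈ S, (x, η) ∈ W) :
    ContDiffOn ℝ 2 (fun x => ∫ η in S, f η • k (x, η) ∂μ) U ∧
    ∀ x ∈ U, ∀ e : E,
      IntegrableOn (fun η => f η • fderiv ℝ (fun y => fderiv ℝ (fun z => k (z, η)) y e) x e) S μ ∧
      fderiv ℝ (fun y => fderiv ℝ (fun x => ∫ η in S, f η • k (x, η) ∂μ) y e) x e =
      ∫ η in S, f η • fderiv ℝ (fun y => fderiv ℝ (fun z => k (z, η)) y e) x e ∂μ := by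
  have hk1 : ContDiffOn ℝ 2 (pd1 k) W :=
    pd1_contDiffOn (n := 2) (m := 3) hW (by exact_mod_cast hk) (by norm_num)
  have hk2 : ContDiffOn ℝ 1 (pd1 (pd1 k)) W :=
    by exact_mod_cast pd1_contDiffOn (n := 1) (m := 2) hW (by exact_mod_cast hk1) (by norm_num)
  have H0 := fun x (hx : x ∈ U) =>
    param_hasFDerivAt hW (hk.of_le (by norm_num)) hS hμ hf (hUW x hx)
  have H1 := fun x (hx : x ∈ U) =>
    param_hasFDerivAt hW (hk1.of_le (by norm_num)) hS hμ hf (hUW x hx)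
  have H2 := fun x (hx : x ∈ U) =>
    param_hasFDerivAt hW hk2 hS hμ hf (hUW x hx)
  have hC2 : ContDiffOn ℝ 1 (fun x => ∫ η in S, f η • pd1 k (x, η) ∂μ) U := by
    rw [show (1 : WithTop ℕ∞) = 0 + 1 by norm_num, contDiffOn_succ_iff_fderiv_of_isOpen hU]
    refine ⟨fun x hx => (H1 x hx).differentiableAt.differentiableWithinAt, by simp, ?_⟩
    rw [contDiffOn_zero]
    refine ContinuousOn.congr (fun x hx => (H2 x hx).continuousAt.continuousWithinAt) ?_
    intro x hx
    exact (H1 x hx).fderiv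
  refine ⟨?_, ?_⟩
  · rw [show (2 : WithTop ℕ∞) = 1 + 1 by norm_num, contDiffOn_succ_iff_fderiv_of_isOpen hU]
    refine ⟨fun x hx => (H0 x hx).differentiableAt.differentiableWithinAt, by simp, ?_⟩
    exact hC2.congr fun x hx => (H0 x hx).fderiv
  · intro x hx e
    have hpt : ∀ η ∈ S, fderiv ℝ (fun y => fderiv ℝ (fun z => k (z, η)) y e) x e =
        pd1 (pd1 k) (x, η) e e := by
      intro η hη
      have hev : (fun y => fderiv ℝ (fun z => k (z, η)) y e) =ᶠ[nhds x]
          fun y => pd1 k (y, η) e := by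
        filter_upwards [hU.mem_nhds hx] with y hy
        rw [(pd1_hasFDerivAt ((hk.differentiableOn (by norm_num)).differentiableAt
          (hW.mem_nhds (hUW y hy η hη)))).fderiv]
      rw [hev.fderiv_eq]
      have := (pd1_hasFDerivAt ((hk1.differentiableOn (by norm_num)).differentiableAt
          (hW.mem_nhds (hUW x hx η hη)))).clm_apply (hasFDerivAt_const e x)
      rw [this.fderiv]
      simp
    have hint : IntegrableOn (fun η => f η • pd1 (pd1 k) (x, η)) S μ :=
      param_integrable hS hμ (param_section_cont hk2.continuousOn (hUW x hx) hf)
    have hint1 : IntegrableOn (fun η => (f η • pd1 (pd1 k) (x, η)) e) S μ :=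
      hint.apply_continuousLinearMap e
    have hint2 : IntegrableOn (fun η => (f η • pd1 (pd1 k) (x, η)) e e) S μ :=
      hint1.apply_continuousLinearMap e
    constructor
    · refine IntegrableOn.congr_fun hint2 (fun η hη => ?_) hS.measurableSet
      simp [hpt η hη]
    · have hev : (fun y => fderiv ℝ (fun x => ∫ η in S, f η • k (x, η) ∂μ) y e) =ᶠ[nhds x]
          fun y => (∫ η in S, f η • pd1 k (y, η) ∂μ) e := by
        filter_upwards [hU.mem_nhds hx] with y hy
        rw [(H0 y hy).fderiv]
      rw [hev.fderiv_eq, ((H1 x hx).clm_apply (hasFDerivAt_const e x)).fderiv]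
      rw [setIntegral_congr_fun hS.measurableSet
        (g := fun η => (f η • pd1 (pd1 k) (x, η)) e e) (fun η hη => by simp [hpt η hη])]
      simp only [ContinuousLinearMap.comp_zero, zero_add, ContinuousLinearMap.flip_apply]
      rw [← ContinuousLinearMap.integral_apply hint1, ← ContinuousLinearMap.integral_apply hint]

end Param

/-! ### The kernel -/

/-- The unnormalised Poisson kernel. -/
noncomputable def kern (d : ℕ) (p : (EuclideanSpace ℝ (Fin d)) × (EuclideanSpace ℝ (Fin d))) : ℝ :=
  (‖p.1‖ ^ 2 - ‖p.2‖ ^ 2) / ‖p.1 - p.2‖ ^ d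

lemma kern_contDiffOn (d : ℕ) : ContDiffOn ℝ 3 (kern d) {p | p.1 ≠ p.2} := by
  unfold kern
  refine ContDiffOn.div ?_ ?_ ?_
  · exact ((contDiff_fst.norm_sq ℝ).sub (contDiff_snd.norm_sq ℝ)).contDiffOn
  · refine ContDiffOn.pow ?_ d
    exact (contDiff_fst.sub contDiff_snd).contDiffOn.norm ℝ fun p hp => sub_ne_zero.2 hp
  · intro p hp
    exact pow_ne_zero _ (norm_ne_zero_iff.2 (sub_ne_zero.2 hp))

lemma kern_W_open (d : ℕ) : IsOpen {p : (EuclideanSpace ℝ (Fin d)) × (EuclideanSpace ℝ (Fin d)) | p.1 ≠ p.2} :=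
  isOpen_ne_fun continuous_fst continuous_snd

lemma kern_contDiffOn_left (d : ℕ) (η : (EuclideanSpace ℝ (Fin d))) :
    ContDiffOn ℝ 3 (fun x => kern d (x, η)) {x | x ≠ η} :=
  (kern_contDiffOn d).comp (by fun_prop) fun _ hx => hx

lemma hasDerivAt_normpow {d : ℕ} (m : ℕ) (y η : (EuclideanSpace ℝ (Fin d))) (i : Fin d) (hy : y ≠ η) :
    HasDerivAt (fun t : ℝ => ‖y + t • EuclideanSpace.single i (1 : ℝ) - η‖ ^ (m + 2))
      ((m + 2) * ‖y - η‖ ^ m * (y i - η i)) 0 := by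
  have hr : ‖y - η‖ ≠ 0 := norm_ne_zero_iff.2 (sub_ne_zero.2 hy)
  have hl : HasDerivAt (fun t : ℝ => y + t • EuclideanSpace.single i (1 : ℝ) - η)
      (EuclideanSpace.single i (1 : ℝ)) 0 := by
    have := (((hasDerivAt_id (0:ℝ)).smul_const (EuclideanSpace.single i (1 : ℝ))).const_add
      y).sub_const η
    rw [one_smul] at this
    exact this
  have h1 := hl.norm_sq
  have h2 := h1.sqrt (by simpa using sub_ne_zero.2 hy)
  have h3 := h2.pow (m + 2)
  refine (h3.congr_deriv ?_).congr_of_eventuallyEq ?_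
  · simp [EuclideanSpace.inner_single_right]
    field_simp
    ring
  · refine Filter.Eventually.of_forall fun t => ?_
    simp

lemma hasDerivAt_coord {d : ℕ} (y : (EuclideanSpace ℝ (Fin d))) (i : Fin d) :
    HasDerivAt (fun t : ℝ => (y + t • EuclideanSpace.single i (1 : ℝ)) i) 1 0 := by
  have := (hasDerivAt_id (0:ℝ)).const_add (y i)
  simpa using this

lemma hasDerivAt_normsq {d : ℕ} (y : (EuclideanSpace ℝ (Fin d))) (i : Fin d) :
    HasDerivAt (fun t : ℝ => ‖y + t • EuclideanSpace.single i (1 : ℝ)‖ ^ 2) (2 * y i) 0 := by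
  have hl : HasDerivAt (fun t : ℝ => y + t • EuclideanSpace.single i (1 : ℝ))
      (EuclideanSpace.single i (1 : ℝ)) 0 := by
    have := (((hasDerivAt_id (0:ℝ)).smul_const (EuclideanSpace.single i (1 : ℝ))).const_add y)
    rw [one_smul] at this
    exact this
  refine hl.norm_sq.congr_deriv ?_
  simp [EuclideanSpace.inner_single_right]

lemma kern_fderiv (m : ℕ) (y η : (EuclideanSpace ℝ (Fin (m+2)))) (i : Fin (m+2)) (hy : y ≠ η) :
    fderiv ℝ (fun z => kern (m+2) (z, η)) y (EuclideanSpace.single i (1 : ℝ)) =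
      2 * y i / ‖y - η‖ ^ (m + 2) -
      (m + 2) * ((‖y‖ ^ 2 - ‖η‖ ^ 2) * (y i - η i)) / ‖y - η‖ ^ (m + 2 + 2) := by
  have hr : ‖y - η‖ ≠ 0 := norm_ne_zero_iff.2 (sub_ne_zero.2 hy)
  have hdiff : DifferentiableAt ℝ (fun z => kern (m+2) (z, η)) y :=
    ((kern_contDiffOn_left (m+2) η).differentiableOn (by norm_num)).differentiableAt
      (isOpen_ne.mem_nhds hy)
  rw [← hdiff.lineDeriv_eq_fderiv]
  refine HasLineDerivAt.lineDeriv ?_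
  have h := ((hasDerivAt_normsq y i).sub_const (‖η‖ ^ 2)).div (hasDerivAt_normpow m y η i hy)
    (by simpa using pow_ne_zero (m+2) hr)
  refine HasDerivAt.congr_deriv (f := fun t : ℝ => kern (m+2) (y + t • _, η)) h ?_
  simp only [zero_smul, add_zero]
  field_simp
  ring

lemma kern_fderiv2 (m : ℕ) (y η : (EuclideanSpace ℝ (Fin (m+2)))) (i : Fin (m+2)) (hy : y ≠ η) :
    fderiv ℝ (fun x => fderiv ℝ (fun z => kern (m+2) (z, η)) x (EuclideanSpace.single i (1 : ℝ))) y
      (EuclideanSpace.single i (1 : ℝ)) =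
      2 / ‖y - η‖ ^ (m + 2) - (m + 2) * (‖y‖ ^ 2 - ‖η‖ ^ 2) / ‖y - η‖ ^ (m + 4)
      - 4 * (m + 2) / ‖y - η‖ ^ (m + 4) * (y i * (y i - η i))
      + (m + 2) * (m + 4) * (‖y‖ ^ 2 - ‖η‖ ^ 2) / ‖y - η‖ ^ (m + 6) * (y i - η i) ^ 2 := by
  have hr : ‖y - η‖ ≠ 0 := norm_ne_zero_iff.2 (sub_ne_zero.2 hy)
  have hdiff : DifferentiableAt ℝ (fun x => fderiv ℝ (fun z => kern (m+2) (z, η)) x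
      (EuclideanSpace.single i (1 : ℝ))) y := by
    have h1 : ContDiffOn ℝ 2 (fderiv ℝ (fun z => kern (m+2) (z, η))) {x | x ≠ η} :=
      (kern_contDiffOn_left (m+2) η).fderiv_of_isOpen isOpen_ne (by norm_num)
    exact ((h1.differentiableOn (by norm_num)).differentiableAt
      (isOpen_ne.mem_nhds hy)).clm_apply (differentiableAt_const _)
  have hev : (fun x => fderiv ℝ (fun z => kern (m+2) (z, η)) x (EuclideanSpace.single i (1 : ℝ)))
      =ᶠ[nhds y] fun y => 2 * y i / ‖y - η‖ ^ (m + 2) -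
      (m + 2) * ((‖y‖ ^ 2 - ‖η‖ ^ 2) * (y i - η i)) / ‖y - η‖ ^ (m + 2 + 2) := by
    filter_upwards [isOpen_ne.mem_nhds hy] with x hx
    exact kern_fderiv m x η i hx
  have hdiff' := hev.differentiableAt_iff.1 hdiff
  rw [hev.fderiv_eq, ← hdiff'.lineDeriv_eq_fderiv]
  refine HasLineDerivAt.lineDeriv ?_
  have ha := ((hasDerivAt_coord y i).const_mul 2).div (hasDerivAt_normpow m y η i hy)
    (by simpa using pow_ne_zero (m+2) hr)
  have hb := (((((hasDerivAt_normsq y i).sub_const (‖η‖ ^ 2)).mul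
    ((hasDerivAt_coord y i).sub_const (η i))).const_mul ((m : ℝ) + 2))).div
    (hasDerivAt_normpow (m+2) y η i hy) (by simpa using pow_ne_zero (m+2+2) hr)
  refine HasDerivAt.congr_deriv (f := fun t : ℝ => _) (ha.sub hb) ?_
  simp only [zero_smul, add_zero, Pi.mul_apply]
  push_cast
  field_simp
  ring

lemma kern_harmonic (d : ℕ) (hd : 3 ≤ d) (x η : (EuclideanSpace ℝ (Fin d))) (hx : x ≠ η) :
    ∑ i : Fin d, fderiv ℝ (fun y => fderiv ℝ (fun z => kern d (z, η)) y
      (EuclideanSpace.single i (1 : ℝ))) x (EuclideanSpace.single i (1 : ℝ)) = 0 := by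
  obtain ⟨m, rfl⟩ : ∃ m, d = m + 2 := ⟨d - 2, by omega⟩
  have hr : ‖x - η‖ ≠ 0 := norm_ne_zero_iff.2 (sub_ne_zero.2 hx)
  simp only [kern_fderiv2 m x η _ hx]
  rw [Finset.sum_add_distrib, Finset.sum_sub_distrib, Finset.sum_const, ← Finset.mul_sum,
    ← Finset.mul_sum]
  have h1 : ∑ i, (x i - η i) ^ 2 = ‖x - η‖ ^ 2 := by
    rw [EuclideanSpace.norm_sq_eq]; simp
  have h2 : 2 * ∑ i, x i * (x i - η i) = ‖x - η‖ ^ 2 + ‖x‖ ^ 2 - ‖η‖ ^ 2 := by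
    rw [EuclideanSpace.norm_sq_eq, EuclideanSpace.norm_sq_eq, EuclideanSpace.norm_sq_eq,
      Finset.mul_sum, ← Finset.sum_add_distrib, ← Finset.sum_sub_distrib]
    refine Finset.sum_congr rfl fun i _ => ?_
    simp
    ring
  have h3 : ∑ i, x i * (x i - η i) = (‖x - η‖ ^ 2 + ‖x‖ ^ 2 - ‖η‖ ^ 2) / 2 := by linarith
  rw [h1, h3]
  simp only [Finset.card_univ, Fintype.card_fin, nsmul_eq_mul]
  push_cast
  field_simp
  ring

/-! ### The Poisson integral -/

/-- The normalised Poisson kernel. -/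
noncomputable def nker (d : ℕ) (R : ℝ) (x η : (EuclideanSpace ℝ (Fin d))) : ℝ :=
  (‖x‖ ^ 2 - R ^ 2) / (unitSphereArea d * R * ‖x - η‖ ^ d)

lemma poisson_eq_nker (d : ℕ) (R : ℝ) (f : (EuclideanSpace ℝ (Fin d)) → ℝ) (x : (EuclideanSpace ℝ (Fin d))) :
    extPoissonIntegral d R f x =
      ∫ η in Metric.sphere (0 : (EuclideanSpace ℝ (Fin d))) R, nker d R x η * f η ∂(μH[(d : ℝ) - 1]) := rfl

lemma poisson_eq_kern (d : ℕ) (R : ℝ) (f : (EuclideanSpace ℝ (Fin d)) → ℝ) :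
    extPoissonIntegral d R f = fun x => ∫ η in Metric.sphere (0 : (EuclideanSpace ℝ (Fin d))) R,
      ((unitSphereArea d * R)⁻¹ * f η) • kern d (x, η) ∂(μH[(d : ℝ) - 1]) := by
  funext x
  unfold extPoissonIntegral
  refine setIntegral_congr_fun Metric.isClosed_sphere.measurableSet fun η hη => ?_
  have : ‖η‖ = R := by simpa using hη
  simp only [kern, this, smul_eq_mul]
  rw [div_eq_mul_inv, div_eq_mul_inv, mul_inv]
  ring

lemma poisson_harmonic (d : ℕ) (hd : 3 ≤ d) (R : ℝ) (hR : 0 < R) (f : (EuclideanSpace ℝ (Fin d)) → ℝ)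
    (hf : ContinuousOn f (Metric.sphere (0 : (EuclideanSpace ℝ (Fin d))) R)) :
    ContDiffOn ℝ 2 (extPoissonIntegral d R f) {x | R < ‖x‖} ∧
    ∀ x : (EuclideanSpace ℝ (Fin d)), R < ‖x‖ →
      ∑ i : Fin d,
        fderiv ℝ (fun y => fderiv ℝ (extPoissonIntegral d R f) y
          (EuclideanSpace.single i (1 : ℝ))) x (EuclideanSpace.single i (1 : ℝ)) = 0 := by
  rw [poisson_eq_kern]
  have hU : IsOpen {x : (EuclideanSpace ℝ (Fin d)) | R < ‖x‖} := isOpen_lt continuous_const continuous_norm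
  have hne : ∀ x ∈ {x : (EuclideanSpace ℝ (Fin d)) | R < ‖x‖}, ∀ η ∈ Metric.sphere (0 : (EuclideanSpace ℝ (Fin d))) R,
      (x, η) ∈ {p : (EuclideanSpace ℝ (Fin d)) × (EuclideanSpace ℝ (Fin d)) | p.1 ≠ p.2} := by
    intro x hx η hη h
    have h1 : ‖η‖ = R := by simpa using hη
    have h2 : R < ‖x‖ := hx
    have h3 : x = η := h
    rw [h3, h1] at h2
    exact lt_irrefl _ h2
  obtain ⟨H1, H2⟩ := param_main (kern_W_open d) (kern_contDiffOn d)
    (isCompact_sphere (0 : (EuclideanSpace ℝ (Fin d))) R) (sphere_measure d hd R hR).2.1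
    (f := fun η => (unitSphereArea d * R)⁻¹ * f η) (continuousOn_const.mul hf) hU hne
  refine ⟨H1, fun x hx => ?_⟩
  rw [Finset.sum_congr rfl fun i _ => (H2 x hx (EuclideanSpace.single i (1 : ℝ))).2]
  rw [← integral_finsetSum _ fun i _ => (H2 x hx (EuclideanSpace.single i (1 : ℝ))).1]
  rw [setIntegral_congr_fun (g := fun _ => (0 : ℝ)) Metric.isClosed_sphere.measurableSet]
  · simp
  · intro η hη
    simp only
    rw [← Finset.smul_sum, kern_harmonic d hd x η (hne x hx η hη), smul_zero]

lemma nker_pos {d : ℕ} (hd : 3 ≤ d) {R : ℝ} (hR : 0 < R) {x η : (EuclideanSpace ℝ (Fin d))} (hx : R < ‖x‖)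
    (hη : ‖η‖ = R) : 0 < nker d R x η := by
  have h1 := (sphere_measure d hd R hR).1
  have h2 : 0 < ‖x - η‖ := by
    rw [norm_pos_iff, sub_ne_zero]
    rintro rfl
    exact lt_irrefl _ (hη ▸ hx)
  have h3 : 0 < ‖x‖ ^ 2 - R ^ 2 := by nlinarith
  unfold nker
  positivity

lemma nker_cont {d : ℕ} (hd : 3 ≤ d) {R : ℝ} (hR : 0 < R) {x : (EuclideanSpace ℝ (Fin d))} (hx : R < ‖x‖) :
    ContinuousOn (nker d R x) (Metric.sphere (0 : (EuclideanSpace ℝ (Fin d))) R) := by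
  have h1 := (sphere_measure d hd R hR).1
  unfold nker
  refine ContinuousOn.div (by fun_prop) (by fun_prop) fun η hη => ?_
  have hη' : ‖η‖ = R := by simpa using hη
  have h2 : 0 < ‖x - η‖ := by
    rw [norm_pos_iff, sub_ne_zero]
    rintro rfl
    exact lt_irrefl _ (hη' ▸ hx)
  positivity

lemma nker_integrable {d : ℕ} (hd : 3 ≤ d) {R : ℝ} (hR : 0 < R) {x : (EuclideanSpace ℝ (Fin d))} (hx : R < ‖x‖)
    {f : (EuclideanSpace ℝ (Fin d)) → ℝ} (hf : ContinuousOn f (Metric.sphere (0 : (EuclideanSpace ℝ (Fin d))) R)) :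
    IntegrableOn (fun η => nker d R x η * f η) (Metric.sphere (0 : (EuclideanSpace ℝ (Fin d))) R) (μH[(d : ℝ) - 1]) :=
  param_integrable (isCompact_sphere (0 : (EuclideanSpace ℝ (Fin d))) R) (sphere_measure d hd R hR).2.1
    ((nker_cont hd hR hx).mul hf)

/-- The Poisson integral of the constant `1`. -/
noncomputable def pone (d : ℕ) (R : ℝ) (x : (EuclideanSpace ℝ (Fin d))) : ℝ :=
  extPoissonIntegral d R (fun _ => 1) x

lemma poisson_bound {d : ℕ} (hd : 3 ≤ d) {R : ℝ} (hR : 0 < R) {x : (EuclideanSpace ℝ (Fin d))} (hx : R < ‖x‖)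
    {f : (EuclideanSpace ℝ (Fin d)) → ℝ} (a b : ℝ)
    (h : ∀ η : (EuclideanSpace ℝ (Fin d)), ‖η‖ = R → nker d R x η * |f η| ≤ a * nker d R x η + b) :
    |extPoissonIntegral d R f x| ≤ a * pone d R x + b * (R ^ (d - 1) * unitSphereArea d) := by
  have hS := sphere_measure d hd R hR
  have hmS : MeasurableSet (Metric.sphere (0 : (EuclideanSpace ℝ (Fin d))) R) := Metric.isClosed_sphere.measurableSet
  have hi1 : IntegrableOn (fun η => a * (nker d R x η * 1))
      (Metric.sphere (0 : (EuclideanSpace ℝ (Fin d))) R) (μH[(d : ℝ) - 1]) :=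
    (nker_integrable hd hR hx (f := fun _ => 1) continuousOn_const).const_mul a
  have hi2 : IntegrableOn (fun _ : (EuclideanSpace ℝ (Fin d)) => b)
      (Metric.sphere (0 : (EuclideanSpace ℝ (Fin d))) R) (μH[(d : ℝ) - 1]) :=
    integrableOn_const hS.2.1.ne
  have key : a * pone d R x + b * (R ^ (d - 1) * unitSphereArea d) =
      ∫ η in Metric.sphere (0 : (EuclideanSpace ℝ (Fin d))) R, (a * (nker d R x η * 1) + b) ∂(μH[(d : ℝ) - 1]) := by
    rw [integral_add hi1 hi2, integral_const_mul, setIntegral_const, ← hS.2.2, smul_eq_mul,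
      mul_comm b]
    rfl
  rw [key, poisson_eq_nker, ← Real.norm_eq_abs]
  refine norm_integral_le_of_norm_le (hi1.add hi2) ?_
  refine (ae_restrict_iff' hmS).2 (Filter.Eventually.of_forall fun η hη => ?_)
  have hη' : ‖η‖ = R := by simpa using hη
  rw [norm_mul, Real.norm_eq_abs, Real.norm_eq_abs, abs_of_pos (nker_pos hd hR hx hη')]
  simpa using h η hη'

lemma pone_rot {d : ℕ} {R : ℝ} {x y : (EuclideanSpace ℝ (Fin d))} (hxy : ‖x‖ = ‖y‖) : pone d R x = pone d R y := by
  let L : (EuclideanSpace ℝ (Fin d)) ≃ₗᵢ[ℝ] (EuclideanSpace ℝ (Fin d)) := (Submodule.span ℝ {x - y})ᗮ.reflection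
  have hL : L x = y := Submodule.reflection_sub hxy
  have hmp : MeasurePreserving L (μH[(d : ℝ) - 1]) (μH[(d : ℝ) - 1]) :=
    L.toIsometryEquiv.measurePreserving_hausdorffMeasure _
  have hme : MeasurableEmbedding L := L.toHomeomorph.measurableEmbedding
  unfold pone
  rw [poisson_eq_nker, poisson_eq_nker]
  have := hmp.setIntegral_preimage_emb hme (fun η => nker d R y η * 1) (Metric.sphere (0 : (EuclideanSpace ℝ (Fin d))) R)
  rw [← this]
  have hpre : L ⁻¹' Metric.sphere (0 : (EuclideanSpace ℝ (Fin d))) R = Metric.sphere (0 : (EuclideanSpace ℝ (Fin d))) R := by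
    ext z; simp
  rw [hpre]
  congr 1
  funext η
  unfold nker
  rw [← hL, ← map_sub, L.norm_map, L.norm_map]

lemma pone_bounds {d : ℕ} (hd : 3 ≤ d) {R : ℝ} (hR : 0 < R) {x : (EuclideanSpace ℝ (Fin d))} (hx : R < ‖x‖) :
    R ^ (d - 2) * ((‖x‖ ^ 2 - R ^ 2) / (‖x‖ + R) ^ d) ≤ pone d R x ∧
    pone d R x ≤ R ^ (d - 2) * ((‖x‖ ^ 2 - R ^ 2) / (‖x‖ - R) ^ d) := by
  have hS := sphere_measure d hd R hR
  have hΩ := hS.1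
  have hmS : MeasurableSet (Metric.sphere (0 : (EuclideanSpace ℝ (Fin d))) R) := Metric.isClosed_sphere.measurableSet
  have hi1 : IntegrableOn (fun η => nker d R x η * 1)
      (Metric.sphere (0 : (EuclideanSpace ℝ (Fin d))) R) (μH[(d : ℝ) - 1]) :=
    nker_integrable hd hR hx (f := fun _ => 1) continuousOn_const
  have hic : ∀ c : ℝ, IntegrableOn (fun _ : (EuclideanSpace ℝ (Fin d)) => c)
      (Metric.sphere (0 : (EuclideanSpace ℝ (Fin d))) R) (μH[(d : ℝ) - 1]) := fun c =>
    integrableOn_const hS.2.1.ne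
  have hpow : R ^ (d - 1) = R ^ (d - 2) * R := by
    rw [← pow_succ]; congr 1; omega
  have hconst : ∀ c : ℝ, R ^ (d - 2) * c =
      ∫ η in Metric.sphere (0 : (EuclideanSpace ℝ (Fin d))) R, c / (unitSphereArea d * R) ∂(μH[(d : ℝ) - 1]) := by
    intro c
    rw [setIntegral_const, smul_eq_mul]
    unfold Measure.real
    rw [hS.2.2, hpow]
    field_simp
  have h3 : 0 < ‖x‖ ^ 2 - R ^ 2 := by nlinarith
  have hRx : 0 < ‖x‖ - R := sub_pos.2 hx
  rw [hconst, hconst]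
  unfold pone
  rw [poisson_eq_nker]
  constructor
  · refine setIntegral_mono_on (hic _) hi1 hmS fun η hη => ?_
    have hη' : ‖η‖ = R := by simpa using hη
    have h2 : 0 < ‖x - η‖ := by
      have := norm_sub_norm_le x η
      rw [hη'] at this; linarith
    have h4 : ‖x - η‖ ≤ ‖x‖ + R := hη' ▸ norm_sub_le x η
    unfold nker
    rw [mul_one, div_div, mul_comm (_ ^ d)]
    gcongr
  · refine setIntegral_mono_on hi1 (hic _) hmS fun η hη => ?_
    have hη' : ‖η‖ = R := by simpa using hη
    have h4 : ‖x‖ - R ≤ ‖x - η‖ := hη' ▸ norm_sub_norm_le x η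
    unfold nker
    rw [mul_one, div_div, mul_comm (_ ^ d)]
    gcongr

lemma ratio_lim (d : ℕ) (hd : 3 ≤ d) (R s : ℝ) :
    Filter.Tendsto (fun t : ℝ => t ^ (d - 2) * (R ^ (d - 2) * ((t ^ 2 - R ^ 2) / (t + s) ^ d)))
      Filter.atTop (nhds (R ^ (d - 2))) := by
  have h0 : ∀ c : ℝ, Filter.Tendsto (fun t : ℝ => c / t) Filter.atTop (nhds 0) := fun c =>
    tendsto_const_nhds.div_atTop Filter.tendsto_id
  have h1 : Filter.Tendsto (fun t : ℝ => R ^ (d - 2) * ((1 - (R / t) ^ 2) / (1 + s / t) ^ d))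
      Filter.atTop (nhds (R ^ (d - 2) * ((1 - 0 ^ 2) / (1 + 0) ^ d))) := by
    refine Filter.Tendsto.const_mul _ (Filter.Tendsto.div ?_ ?_ (by simp))
    · exact ((h0 R).pow 2).const_sub 1
    · exact ((h0 s).const_add 1).pow d
  have h2 : R ^ (d - 2) * ((1 - (0:ℝ) ^ 2) / (1 + 0) ^ d) = R ^ (d - 2) := by simp
  rw [h2] at h1
  refine h1.congr' ?_
  filter_upwards [Filter.eventually_gt_atTop (max 0 (-s))] with t ht
  have ht0 : 0 < t := (le_max_left _ _).trans_lt ht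
  have hts : 0 < t + s := by have := (le_max_right 0 (-s)).trans_lt ht; linarith
  have e1 : (1 + s / t) = (t + s) / t := by field_simp
  have e2 : t ^ d = t ^ (d - 2) * t ^ 2 := by rw [← pow_add]; congr 1; omega
  rw [e1, div_pow (t + s), e2]
  field_simp

lemma pone_lim {d : ℕ} (hd : 3 ≤ d) {R : ℝ} (hR : 0 < R) :
    Filter.Tendsto (fun x : (EuclideanSpace ℝ (Fin d)) => ‖x‖ ^ (d - 2) * pone d R x) (Filter.comap norm Filter.atTop)
      (nhds (R ^ (d - 2))) := by
  have hn : Filter.Tendsto (norm : (EuclideanSpace ℝ (Fin d)) → ℝ) (Filter.comap norm Filter.atTop) Filter.atTop :=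
    Filter.tendsto_comap
  refine tendsto_of_tendsto_of_tendsto_of_le_of_le' ((ratio_lim d hd R R).comp hn)
    ((ratio_lim d hd R (-R)).comp hn) ?_ ?_
  · filter_upwards [hn.eventually_gt_atTop R] with x hx
    exact mul_le_mul_of_nonneg_left (pone_bounds hd hR hx).1 (by positivity)
  · filter_upwards [hn.eventually_gt_atTop R] with x hx
    exact mul_le_mul_of_nonneg_left (pone_bounds hd hR hx).2 (by positivity)

lemma inv_norm_lim {d : ℕ} (hd : 3 ≤ d) :
    Filter.Tendsto (fun x : (EuclideanSpace ℝ (Fin d)) => (‖x‖ ^ (d - 2))⁻¹) (Filter.comap norm Filter.atTop)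
      (nhds 0) :=
  ((Filter.tendsto_pow_atTop (by omega : d - 2 ≠ 0)).comp Filter.tendsto_comap).inv_tendsto_atTop

lemma pone_zero {d : ℕ} (hd : 3 ≤ d) {R : ℝ} (hR : 0 < R) :
    Filter.Tendsto (pone d R) (Filter.comap norm Filter.atTop) (nhds 0) := by
  have h := (inv_norm_lim hd).mul (pone_lim hd hR)
  rw [zero_mul] at h
  refine h.congr' ?_
  have hn : Filter.Tendsto (norm : (EuclideanSpace ℝ (Fin d)) → ℝ) (Filter.comap norm Filter.atTop) Filter.atTop :=
    Filter.tendsto_comap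
  filter_upwards [hn.eventually_gt_atTop 0] with x hx
  rw [← mul_assoc, inv_mul_cancel₀ (by positivity), one_mul]

lemma kern_zero {d : ℕ} (hd : 3 ≤ d) {z : (EuclideanSpace ℝ (Fin d))} (hz : 0 < ‖z‖) :
    kern d (z, 0) = (‖z‖ ^ (d - 2))⁻¹ := by
  have e2 : ‖z‖ ^ d = ‖z‖ ^ (d - 2) * ‖z‖ ^ 2 := by rw [← pow_add]; congr 1; omega
  unfold kern
  simp only [sub_zero, norm_zero]
  rw [e2]
  field_simp
  simp

lemma pone_eq {d : ℕ} (hd : 3 ≤ d) {R : ℝ} (hR : 0 < R) {x : (EuclideanSpace ℝ (Fin d))} (hx : R < ‖x‖) :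
    pone d R x = (R / ‖x‖) ^ (d - 2) := by
  have hx0 : 0 < ‖x‖ := hR.trans hx
  have hH := poisson_harmonic d hd R hR (fun _ => 1) continuousOn_const
  have hU : IsOpen {y : (EuclideanSpace ℝ (Fin d)) | ‖x‖ < ‖y‖} := isOpen_lt continuous_const continuous_norm
  have s1 : IsExtDirichletSolution d ‖x‖ (fun _ => pone d R x) (pone d R) := by
    refine ⟨hH.1.mono fun y (hy : ‖x‖ < ‖y‖) => show R < ‖y‖ from hx.trans hy,
      fun y hy => hH.2 y (hx.trans hy),
      hH.1.continuousOn.mono fun y (hy : ‖x‖ ≤ ‖y‖) => show R < ‖y‖ from hx.trans_le hy,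
      fun η hη => pone_rot hη, pone_zero hd hR⟩
  set c : ℝ := pone d R x * ‖x‖ ^ (d - 2) with hc
  have s2 : IsExtDirichletSolution d ‖x‖ (fun _ => pone d R x) (fun z => c * kern d (z, 0)) := by
    have hsub : ∀ y : (EuclideanSpace ℝ (Fin d)), ‖x‖ ≤ ‖y‖ → y ≠ 0 := fun y hy =>
      norm_pos_iff.1 (hx0.trans_le hy)
    have hK := kern_contDiffOn_left d (0 : (EuclideanSpace ℝ (Fin d)))
    refine ⟨?_, ?_, ?_, ?_, ?_⟩
    · exact contDiffOn_const.mul ((hK.of_le (by norm_num)).mono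
        fun y (hy : ‖x‖ < ‖y‖) => hsub y hy.le)
    · intro y hy
      have hy0 := hsub y hy.le
      have : ∀ e : (EuclideanSpace ℝ (Fin d)), fderiv ℝ (fun w => fderiv ℝ (fun z => c * kern d (z, 0)) w e) y e =
          c * fderiv ℝ (fun w => fderiv ℝ (fun z => kern d (z, 0)) w e) y e := by
        intro e
        have hev : (fun w => fderiv ℝ (fun z => c * kern d (z, 0)) w e) =ᶠ[nhds y]
            fun w => c * fderiv ℝ (fun z => kern d (z, 0)) w e := by
          filter_upwards [isOpen_ne.mem_nhds hy0] with w hw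
          rw [fderiv_const_mul ((hK.differentiableOn (by norm_num)).differentiableAt
            (isOpen_ne.mem_nhds hw))]
          simp
        rw [hev.fderiv_eq, fderiv_const_mul]
        · simp
        · have h1 : ContDiffOn ℝ 2 (fderiv ℝ (fun z => kern d (z, 0))) {x | x ≠ 0} :=
            hK.fderiv_of_isOpen isOpen_ne (by norm_num)
          exact ((h1.differentiableOn (by norm_num)).differentiableAt
            (isOpen_ne.mem_nhds hy0)).clm_apply (differentiableAt_const _)
      simp only [this]
      rw [← Finset.mul_sum, kern_harmonic d hd y 0 hy0, mul_zero]
    · exact continuousOn_const.mul (hK.continuousOn.mono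
        fun y (hy : ‖x‖ ≤ ‖y‖) => hsub y hy)
    · intro η hη
      simp only
      rw [kern_zero hd (by rw [hη]; exact hx0), hη, hc]
      field_simp
    · have h := (inv_norm_lim hd).const_mul c
      rw [mul_zero] at h
      refine h.congr' ?_
      have hn : Filter.Tendsto (norm : (EuclideanSpace ℝ (Fin d)) → ℝ) (Filter.comap norm Filter.atTop) Filter.atTop :=
        Filter.tendsto_comap
      filter_upwards [hn.eventually_gt_atTop 0] with y hy
      rw [kern_zero hd hy]
  have hu := ext_unique d hd ‖x‖ _ _ _ s1 s2
  have hlim : Filter.Tendsto (fun y : (EuclideanSpace ℝ (Fin d)) => ‖y‖ ^ (d - 2) * pone d R y)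
      (Filter.comap norm Filter.atTop) (nhds c) := by
    refine tendsto_const_nhds.congr' ?_
    have hn : Filter.Tendsto (norm : (EuclideanSpace ℝ (Fin d)) → ℝ) (Filter.comap norm Filter.atTop) Filter.atTop :=
      Filter.tendsto_comap
    filter_upwards [hn.eventually_gt_atTop ‖x‖] with y hy
    have hy0 := hx0.trans hy
    rw [hu y hy.le]
    rw [kern_zero hd hy0]
    field_simp
  have : Nonempty (Fin d) := ⟨⟨0, by omega⟩⟩
  have : (Filter.comap (norm : (EuclideanSpace ℝ (Fin d)) → ℝ) Filter.atTop).NeBot := by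
    rw [comap_norm_atTop]
    exact NormedSpace.cobounded_neBot ℝ _
  have hfin := tendsto_nhds_unique hlim (pone_lim hd hR)
  rw [div_pow, ← hfin, hc]
  field_simp

lemma pone_le_one {d : ℕ} (hd : 3 ≤ d) {R : ℝ} (hR : 0 < R) {x : (EuclideanSpace ℝ (Fin d))} (hx : R < ‖x‖) :
    pone d R x ≤ 1 := by
  rw [pone_eq hd hR hx]
  exact pow_le_one₀ (by positivity) ((div_le_one (hR.trans hx)).2 hx.le)

lemma poisson_zero {d : ℕ} (hd : 3 ≤ d) {R : ℝ} (hR : 0 < R) {f : (EuclideanSpace ℝ (Fin d)) → ℝ}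
    (hf : ContinuousOn f (Metric.sphere (0 : (EuclideanSpace ℝ (Fin d))) R)) :
    Filter.Tendsto (extPoissonIntegral d R f) (Filter.comap norm Filter.atTop) (nhds 0) := by
  obtain ⟨M, hM⟩ := (isCompact_sphere (0 : (EuclideanSpace ℝ (Fin d))) R).exists_bound_of_continuousOn hf
  have h := (pone_zero hd hR).const_mul M
  rw [mul_zero] at h
  refine squeeze_zero_norm' ?_ h
  have hn : Filter.Tendsto (norm : (EuclideanSpace ℝ (Fin d)) → ℝ) (Filter.comap norm Filter.atTop) Filter.atTop :=
    Filter.tendsto_comap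
  filter_upwards [hn.eventually_gt_atTop R] with x hx
  have := poisson_bound hd hR hx (f := f) M 0 fun η hη => by
    have h1 := hM η (by simpa using hη)
    have h2 := nker_pos hd hR hx hη
    rw [Real.norm_eq_abs] at h1
    nlinarith
  simpa using this

lemma poisson_boundary {d : ℕ} (hd : 3 ≤ d) {R : ℝ} (hR : 0 < R) {f : (EuclideanSpace ℝ (Fin d)) → ℝ}
    (hf : ContinuousOn f (Metric.sphere (0 : (EuclideanSpace ℝ (Fin d))) R)) {η₀ : (EuclideanSpace ℝ (Fin d))} (hη₀ : ‖η₀‖ = R) :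
    Filter.Tendsto (extPoissonIntegral d R f) (nhdsWithin η₀ {x | R < ‖x‖}) (nhds (f η₀)) := by
  have hΩ := (sphere_measure d hd R hR).1
  obtain ⟨M, hM⟩ := (isCompact_sphere (0 : (EuclideanSpace ℝ (Fin d))) R).exists_bound_of_continuousOn hf
  have hη₀S : η₀ ∈ Metric.sphere (0 : (EuclideanSpace ℝ (Fin d))) R := by simpa using hη₀
  have hM0 : 0 ≤ M := (norm_nonneg _).trans (hM η₀ hη₀S)
  have hself : ∀ᶠ x in nhdsWithin η₀ {x : (EuclideanSpace ℝ (Fin d)) | R < ‖x‖}, R < ‖x‖ := self_mem_nhdsWithin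
  have hsplit : ∀ x : (EuclideanSpace ℝ (Fin d)), R < ‖x‖ → f η₀ * pone d R x +
      extPoissonIntegral d R (fun η => f η - f η₀) x = extPoissonIntegral d R f x := by
    intro x hx
    have i1 := nker_integrable hd hR hx hf
    have i2 := nker_integrable hd hR hx (f := fun _ => 1) continuousOn_const
    have i3 := nker_integrable hd hR hx (f := fun η => f η - f η₀) (hf.sub continuousOn_const)
    unfold pone
    rw [poisson_eq_nker, poisson_eq_nker, poisson_eq_nker, ← integral_const_mul,
      ← integral_add (i2.const_mul _) i3]
    congr 1
    funext η
    ring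
  have hone : Filter.Tendsto (pone d R) (nhdsWithin η₀ {x | R < ‖x‖}) (nhds 1) := by
    have hc : ContinuousAt (fun x : (EuclideanSpace ℝ (Fin d)) => (R / ‖x‖) ^ (d - 2)) η₀ := by
      refine ContinuousAt.pow (continuousAt_const.div continuous_norm.continuousAt ?_) _
      rw [hη₀]; exact hR.ne'
    have h1 : Filter.Tendsto (fun x : (EuclideanSpace ℝ (Fin d)) => (R / ‖x‖) ^ (d - 2))
        (nhdsWithin η₀ {x | R < ‖x‖}) (nhds 1) := by
      have := hc.tendsto.mono_left (nhdsWithin_le_nhds (s := {x : (EuclideanSpace ℝ (Fin d)) | R < ‖x‖}))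
      rwa [hη₀, div_self hR.ne', one_pow] at this
    refine h1.congr' ?_
    filter_upwards [hself] with x hx
    exact (pone_eq hd hR hx).symm
  have hsmall : Filter.Tendsto (extPoissonIntegral d R (fun η => f η - f η₀))
      (nhdsWithin η₀ {x | R < ‖x‖}) (nhds 0) := by
    rw [Metric.tendsto_nhds]
    intro ε hε
    obtain ⟨δ, hδ, hfδ⟩ := Metric.continuousWithinAt_iff.1 (hf η₀ hη₀S) (ε / 2) (half_pos hε)
    let B : (EuclideanSpace ℝ (Fin d)) → ℝ := fun x => 2 * M * ((‖x‖ ^ 2 - R ^ 2) / (unitSphereArea d * R * (δ / 2) ^ d))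
      * (R ^ (d - 1) * unitSphereArea d)
    have hB : Filter.Tendsto B (nhdsWithin η₀ {x | R < ‖x‖}) (nhds 0) := by
      have hBc : Continuous B := by fun_prop
      have := (hBc.tendsto η₀).mono_left (nhdsWithin_le_nhds (s := {x : (EuclideanSpace ℝ (Fin d)) | R < ‖x‖}))
      have h0 : B η₀ = 0 := by simp [B, hη₀]
      rwa [h0] at this
    have hball : ∀ᶠ x in nhdsWithin η₀ {x : (EuclideanSpace ℝ (Fin d)) | R < ‖x‖}, dist x η₀ < δ / 2 :=
      nhdsWithin_le_nhds (Metric.ball_mem_nhds η₀ (half_pos hδ))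
    filter_upwards [hself, hball, hB.eventually (gt_mem_nhds (half_pos hε))] with x hx hxb hxB
    rw [dist_zero_right, Real.norm_eq_abs]
    have hb := poisson_bound hd hR hx (f := fun η => f η - f η₀) (ε / 2)
      (2 * M * ((‖x‖ ^ 2 - R ^ 2) / (unitSphereArea d * R * (δ / 2) ^ d))) ?_
    · have h1 := pone_le_one hd hR hx
      have h2 : ε / 2 * pone d R x ≤ ε / 2 := by nlinarith
      have h3 : 2 * M * ((‖x‖ ^ 2 - R ^ 2) / (unitSphereArea d * R * (δ / 2) ^ d))
        * (R ^ (d - 1) * unitSphereArea d) < ε / 2 := hxB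
      linarith
    · intro η hη
      have hηS : η ∈ Metric.sphere (0 : (EuclideanSpace ℝ (Fin d))) R := by simpa using hη
      have hpos := nker_pos hd hR hx hη
      have h3 : 0 < ‖x‖ ^ 2 - R ^ 2 := by nlinarith
      have hqpos : 0 ≤ (‖x‖ ^ 2 - R ^ 2) / (unitSphereArea d * R * (δ / 2) ^ d) := by positivity
      rcases lt_or_ge (dist η η₀) δ with hc | hc
      · have h4 := hfδ hηS hc
        rw [Real.dist_eq] at h4
        have h5 : 0 ≤ 2 * M * ((‖x‖ ^ 2 - R ^ 2) / (unitSphereArea d * R * (δ / 2) ^ d)) := by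
          positivity
        nlinarith
      · have h4 : δ / 2 ≤ ‖x - η‖ := by
          rw [← dist_eq_norm]
          have := dist_triangle η x η₀
          rw [dist_comm η x] at this
          linarith
        have h5 : nker d R x η ≤ (‖x‖ ^ 2 - R ^ 2) / (unitSphereArea d * R * (δ / 2) ^ d) := by
          unfold nker
          gcongr
        have h6 : |f η - f η₀| ≤ 2 * M := by
          have a1 := hM η hηS
          have a2 := hM η₀ hη₀S
          have a3 := norm_sub_le (f η) (f η₀)
          rw [Real.norm_eq_abs] at a3
          linarith
        have h7 : nker d R x η * |f η - f η₀| ≤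
            (‖x‖ ^ 2 - R ^ 2) / (unitSphereArea d * R * (δ / 2) ^ d) * (2 * M) :=
          mul_le_mul h5 h6 (abs_nonneg _) hqpos
        have h8 : 0 ≤ ε / 2 * nker d R x η := by positivity
        linarith
  have := (hone.const_mul (f η₀)).add hsmall
  rw [mul_one, add_zero] at this
  refine this.congr' ?_
  filter_upwards [hself] with x hx
  exact hsplit x hx

/-- Let `d ≥ 3`, `R > 0`, `D_e = {‖x‖ > R}` and let `f` be continuous on
`Σ_R`.  Then the exterior Poisson integral `Hf` is harmonic on `D_e`, extends continuously to
`{‖x‖ ≥ R}` with boundary values `f` on `Σ_R`, and tends to `0` as `‖x‖ → ∞`; moreover it is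
the unique function with these three properties. -/
theorem exterior_dirichlet_problem
    (d : ℕ) (hd : 3 ≤ d) (R : ℝ) (hR : 0 < R)
    (f : EuclideanSpace ℝ (Fin d) → ℝ)
    (hf : ContinuousOn f (Metric.sphere (0 : EuclideanSpace ℝ (Fin d)) R)) :
    (∃ g : EuclideanSpace ℝ (Fin d) → ℝ, IsExtDirichletSolution d R f g ∧
        ∀ x : EuclideanSpace ℝ (Fin d), R < ‖x‖ → g x = extPoissonIntegral d R f x) ∧
    (∀ g₁ g₂ : EuclideanSpace ℝ (Fin d) → ℝ,
        IsExtDirichletSolution d R f g₁ → IsExtDirichletSolution d R f g₂ →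
        ∀ x : EuclideanSpace ℝ (Fin d), R ≤ ‖x‖ → g₁ x = g₂ x) := by
  classical
  refine ⟨⟨fun x => if R < ‖x‖ then extPoissonIntegral d R f x else f x, ?_, ?_⟩, ?_⟩
  · have hU : IsOpen {x : EuclideanSpace ℝ (Fin d) | R < ‖x‖} :=
      isOpen_lt continuous_const continuous_norm
    obtain ⟨H1, H2⟩ := poisson_harmonic d hd R hR f hf
    have hev : ∀ x : EuclideanSpace ℝ (Fin d), R < ‖x‖ →
        (fun x => if R < ‖x‖ then extPoissonIntegral d R f x else f x) =ᶠ[nhds x]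
          extPoissonIntegral d R f := by
      intro x hx
      filter_upwards [hU.mem_nhds hx] with y hy
      exact if_pos hy
    refine ⟨H1.congr fun x hx => if_pos hx, ?_, ?_, ?_, ?_⟩
    · intro x hx
      rw [← H2 x hx]
      refine Finset.sum_congr rfl fun i _ => ?_
      have h2 : (fun y => fderiv ℝ (fun x => if R < ‖x‖ then extPoissonIntegral d R f x else f x) y
          (EuclideanSpace.single i (1 : ℝ))) =ᶠ[nhds x]
          fun y => fderiv ℝ (extPoissonIntegral d R f) y (EuclideanSpace.single i (1 : ℝ)) := by
        filter_upwards [(hev x hx).fderiv (𝕜 := ℝ)] with y hy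
        rw [hy]
      rw [h2.fderiv_eq]
    · intro x hx
      have hx' : R ≤ ‖x‖ := hx
      rcases hx'.lt_or_eq with h | h
      · refine ContinuousAt.continuousWithinAt ?_
        exact (H1.continuousOn.continuousAt (hU.mem_nhds h)).congr (hev x h).symm
      · have hset : {x : EuclideanSpace ℝ (Fin d) | R ≤ ‖x‖} =
            {x | R < ‖x‖} ∪ Metric.sphere 0 R := by
          ext y
          simp only [Set.mem_ofPred_eq, Set.mem_union, mem_sphere_zero_iff_norm]
          rw [le_iff_lt_or_eq, eq_comm (a := R)]
        have hval : (if R < ‖x‖ then extPoissonIntegral d R f x else f x) = f x :=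
          if_neg (by rw [h]; exact lt_irrefl _)
        unfold ContinuousWithinAt
        rw [hset, nhdsWithin_union, Filter.tendsto_sup]
        beta_reduce
        rw [hval]
        constructor
        · refine (poisson_boundary hd hR hf h.symm).congr' ?_
          filter_upwards [self_mem_nhdsWithin] with y hy
          exact (if_pos hy).symm
        · have hfx := hf x (by simpa using h.symm)
          refine Filter.Tendsto.congr' ?_ hfx
          filter_upwards [self_mem_nhdsWithin] with y hy
          have : ‖y‖ = R := by simpa using hy
          exact (if_neg (by rw [this]; exact lt_irrefl _)).symm
    · intro η hη
      exact if_neg (by rw [hη]; exact lt_irrefl _)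
    · refine (poisson_zero hd hR hf).congr' ?_
      have hn : Filter.Tendsto (norm : EuclideanSpace ℝ (Fin d) → ℝ)
          (Filter.comap norm Filter.atTop) Filter.atTop := Filter.tendsto_comap
      filter_upwards [hn.eventually_gt_atTop R] with x hx
      exact (if_pos hx).symm
  · intro x hx
    exact if_pos hx
  · intro g₁ g₂ h1 h2 x hx
    exact ext_unique d hd R f g₁ g₂ h1 h2 x hx
end

section
/- Let f : ℝ → ℝ be continuous and 2π-periodic, regarded as a function on the boundary of the unit disk D = {x ∈ ℝ² : ‖x‖ < 1}, and let Hf be its harmonic (Poisson) extension to D, given by Hf(x) = (1/2π) ∫_0^{2π} (1 − ‖x‖²)/‖x − (cos θ, sin θ)‖² · f(θ) dθ. Then the Douglas formula holds as an equality in [0,∞]: (1/2) ∫_D ‖∇Hf(x)‖² dx = (1/8π) ∫_0^{2π} ∫_0^{2π} (f(θ) − f(φ))²/(1 − cos(θ − φ)) dθ dφ. -/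
open MeasureTheory
open scoped ENNReal Real

/-- The harmonic (Poisson) extension to the open unit disk (realized as the unit ball of `ℂ`)
of a continuous `2π`-periodic function `f` on the boundary circle:
`Hf(x) = (1/2π) ∫_0^{2π} (1 - ‖x‖²)/‖x - (cos θ, sin θ)‖² f(θ) dθ`. -/
noncomputable def poissonExtension (f : ℝ → ℝ) (x : ℂ) : ℝ :=
  (1 / (2 * Real.pi)) * ∫ θ in (0 : ℝ)..(2 * Real.pi),
    (1 - ‖x‖ ^ 2) / ‖x - Complex.exp (θ * Complex.I)‖ ^ 2 * f θ


noncomputable def cf (g : ℝ → ℂ) (n : ℤ) : ℂ :=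
  (1 / (2 * π) : ℝ) * ∫ θ in (0 : ℝ)..(2 * π), Complex.exp (-(n * θ * Complex.I)) * g θ

lemma cf_eq (g : ℝ → ℂ) (n : ℤ) :
    cf g n = fourierCoeffOn Real.two_pi_pos g n := by
  rw [fourierCoeffOn_eq_integral, cf]
  simp only [sub_zero]
  rw [Complex.real_smul]
  congr 1
  apply intervalIntegral.integral_congr
  intro θ _
  simp only [smul_eq_mul, fourier_coe_apply]
  congr 2
  have : (π : ℂ) ≠ 0 := by exact_mod_cast Real.pi_ne_zero
  push_cast
  field_simp
  ring

lemma parseval_hasSum (g : ℝ → ℂ) (hg : Continuous g) :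
    HasSum (fun n : ℤ => ‖cf g n‖ ^ 2) ((2 * π)⁻¹ * ∫ θ in (0 : ℝ)..(2 * π), ‖g θ‖ ^ 2) := by
  have hL : MemLp g 2 (volume.restrict (Set.Ioc 0 (2 * π))) := by
    have h : MemLp g 2 (volume.restrict (Set.Icc 0 (2 * π))) := by
      obtain ⟨C, hC⟩ := (isCompact_Icc (a := (0:ℝ)) (b := 2 * π)).exists_bound_of_continuousOn
        hg.continuousOn
      refine MemLp.of_bound hg.aestronglyMeasurable C ?_
      filter_upwards [ae_restrict_mem measurableSet_Icc] with x hx using hC x hx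
    exact h.mono_measure (Measure.restrict_mono Set.Ioc_subset_Icc_self le_rfl)
  have := hasSum_sq_fourierCoeffOn Real.two_pi_pos hL
  simp only [cf_eq]
  simpa using this

lemma parseval_lintegral (g : ℝ → ℂ) (hg : Continuous g) :
    ∫⁻ θ in Set.Ioc 0 (2 * π), ENNReal.ofReal (‖g θ‖ ^ 2)
      = ENNReal.ofReal (2 * π) * ∑' n : ℤ, ENNReal.ofReal (‖cf g n‖ ^ 2) := by
  have h := parseval_hasSum g hg
  rw [← ENNReal.ofReal_tsum_of_nonneg (fun n => by positivity) h.summable, h.tsum_eq,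
    ← ENNReal.ofReal_mul (by positivity), ← mul_assoc,
    mul_inv_cancel₀ Real.two_pi_pos.ne', one_mul,
    intervalIntegral.integral_of_le Real.two_pi_pos.le, ofReal_integral_eq_lintegral_ofReal]
  · exact ((hg.norm.pow 2).integrableOn_Icc).mono_set Set.Ioc_subset_Icc_self
  · exact Filter.Eventually.of_forall fun x => by positivity

lemma integral_exp_int (m : ℤ) :
    ∫ θ in (0 : ℝ)..(2 * π), Complex.exp (m * θ * Complex.I) = if m = 0 then ((2 * π : ℝ) : ℂ) else 0 := by
  split_ifs with h
  · simp [h]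
  · have hc : (m : ℂ) * Complex.I ≠ 0 := by simp [h]
    have := integral_exp_mul_complex (a := 0) (b := 2 * π) hc
    have e : (m : ℂ) * Complex.I * ((2 * π : ℝ) : ℂ) = m * (2 * π * Complex.I) := by
      push_cast; ring
    rw [e, Complex.exp_int_mul_two_pi_mul_I] at this
    simp only [Complex.ofReal_zero, mul_zero, Complex.exp_zero, sub_self, zero_div] at this
    rw [← this]
    congr 1; ext θ; congr 1; ring

lemma norm_exp_real (x : ℝ) (m : ℤ) : ‖Complex.exp (m * x * Complex.I)‖ = 1 := by
  have := Complex.norm_exp_ofReal_mul_I (m * x)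
  simpa using this

lemma norm_exp_real_neg (x : ℝ) (m : ℤ) : ‖Complex.exp (-(m * x * Complex.I))‖ = 1 := by
  have := norm_exp_real x (-m)
  simpa using this

lemma norm_exp_real_nat (x : ℝ) (m : ℕ) : ‖Complex.exp (m * x * Complex.I)‖ = 1 := by
  have := norm_exp_real x m
  simpa using this

lemma cf_series (a : ℕ → ℂ) (ha : Summable fun k => ‖a k‖) (n : ℤ) :
    cf (fun θ => ∑' k : ℕ, a k * Complex.exp (k * θ * Complex.I)) n
      = if 0 ≤ n then a n.toNat else 0 := by
  have hs : HasSum (fun k : ℕ => ∫ θ in (0 : ℝ)..(2 * π),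
        Complex.exp (-(n * θ * Complex.I)) * (a k * Complex.exp (k * θ * Complex.I)))
      (∫ θ in (0 : ℝ)..(2 * π),
        Complex.exp (-(n * θ * Complex.I)) * ∑' k : ℕ, a k * Complex.exp (k * θ * Complex.I)) := by
    apply intervalIntegral.hasSum_integral_of_dominated_convergence (fun k _ => ‖a k‖)
    · intro k
      apply Continuous.aestronglyMeasurable
      fun_prop
    · intro k
      refine Filter.Eventually.of_forall fun θ _ => ?_
      rw [norm_mul, norm_mul, norm_exp_real_neg, norm_exp_real_nat]; simp
    · exact Filter.Eventually.of_forall fun θ _ => ha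
    · exact intervalIntegrable_const
    · refine Filter.Eventually.of_forall fun θ _ => ?_
      apply HasSum.mul_left
      apply Summable.hasSum
      apply Summable.of_norm
      simpa [norm_exp_real_nat] using ha
  have e : ∀ k : ℕ, ∫ θ in (0 : ℝ)..(2 * π),
        Complex.exp (-(n * θ * Complex.I)) * (a k * Complex.exp (k * θ * Complex.I))
        = if (k : ℤ) = n then a k * ((2 * π : ℝ) : ℂ) else 0 := by
    intro k
    have e1 : ∀ θ : ℝ, Complex.exp (-(n * θ * Complex.I)) * (a k * Complex.exp (k * θ * Complex.I))
        = a k * Complex.exp (((k - n : ℤ) : ℂ) * θ * Complex.I) := by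
      intro θ
      rw [mul_left_comm, ← Complex.exp_add]
      congr 2; push_cast; ring
    simp_rw [e1]
    rw [intervalIntegral.integral_const_mul, integral_exp_int]
    simp [sub_eq_zero]
  simp_rw [e] at hs
  have hpi : ((2 * π : ℝ) : ℂ) ≠ 0 := by exact_mod_cast Real.two_pi_pos.ne'
  rw [cf, ← hs.tsum_eq]
  split_ifs with hn
  · obtain ⟨m, rfl⟩ := Int.eq_ofNat_of_zero_le hn
    rw [tsum_eq_single m]
    · simp only [if_true, Int.toNat_natCast]
      push_cast at hpi ⊢
      field_simp
    · intro k hk; simp [hk]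
  · have : ∀ k : ℕ, (k : ℤ) ≠ n := by intro k; omega
    simp [this]

lemma parseval_series (a : ℕ → ℂ) (ha : Summable fun k => ‖a k‖) :
    ∫⁻ θ in Set.Ioc 0 (2 * π),
        ENNReal.ofReal (‖∑' k : ℕ, a k * Complex.exp (k * θ * Complex.I)‖ ^ 2)
      = ENNReal.ofReal (2 * π) * ∑' k : ℕ, ENNReal.ofReal (‖a k‖ ^ 2) := by
  have hc : Continuous fun θ : ℝ => ∑' k : ℕ, a k * Complex.exp (k * θ * Complex.I) := by
    refine continuous_tsum (fun k => by fun_prop) ha ?_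
    intro k θ
    simp [norm_exp_real_nat]
  rw [parseval_lintegral _ hc]
  simp_rw [cf_series a ha]
  rw [tsum_of_nat_of_neg_add_one ENNReal.summable ENNReal.summable]
  congr 1
  have : ∀ n : ℕ, ¬ (0 ≤ -((n : ℤ) + 1)) := by intro n; omega
  simp only [this, if_false]
  simp

lemma cf_bound (g : ℝ → ℂ) (C : ℝ) (hC : ∀ x, ‖g x‖ ≤ C) (n : ℤ) : ‖cf g n‖ ≤ C := by
  rw [cf, norm_mul, Complex.norm_real]
  have := intervalIntegral.norm_integral_le_of_norm_le_const (a := 0) (b := 2 * π) (C := C)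
    (f := fun θ : ℝ => Complex.exp (-(n * θ * Complex.I)) * g θ) (by
      intro x _; rw [norm_mul, norm_exp_real_neg, one_mul]; exact hC x)
  have hp := Real.two_pi_pos
  rw [sub_zero, abs_of_pos hp] at this
  rw [Real.norm_of_nonneg (by positivity)]
  calc _ ≤ 1 / (2 * π) * (C * (2 * π)) := by gcongr
    _ = C := by field_simp

lemma lintegral_periodic (h : ℝ → ℝ≥0∞) {T : ℝ} (hT : 0 < T) (hp : Function.Periodic h T)
    (s t : ℝ) : ∫⁻ x in Set.Ioc s (s + T), h x = ∫⁻ x in Set.Ioc t (t + T), h x := by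
  have : VAddInvariantMeasure (AddSubgroup.zmultiples T) ℝ volume :=
    ⟨fun c s _ => measure_preimage_add _ _ _⟩
  apply IsAddFundamentalDomain.setLIntegral_eq (G := AddSubgroup.zmultiples T)
  exacts [isAddFundamentalDomain_Ioc hT s, isAddFundamentalDomain_Ioc hT t,
    hp.map_vadd_zmultiples]

lemma exists_bound (f : ℝ → ℝ) (hf : Continuous f) (hper : Function.Periodic f (2 * π)) :
    ∃ C : ℝ, ∀ x, ‖((f x : ℝ) : ℂ)‖ ≤ C := by
  obtain ⟨C, hC⟩ := (hper.isBounded_of_continuous Real.two_pi_pos.ne' hf).exists_norm_le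
  exact ⟨C, fun x => by rw [Complex.norm_real]; exact hC _ ⟨x, rfl⟩⟩

noncomputable def holo (c : ℕ → ℂ) (z : ℂ) : ℂ := c 0 + ∑' n : ℕ, 2 * c (n + 1) * z ^ (n + 1)

noncomputable def holoD (c : ℕ → ℂ) (z : ℂ) : ℂ := ∑' n : ℕ, 2 * (n + 1) * c (n + 1) * z ^ n

lemma summable_aux {r : ℝ} (hr0 : 0 ≤ r) (hr : r < 1) (C : ℝ) :
    Summable fun n : ℕ => 2 * (n + 1 : ℝ) * C * r ^ n := by
  have h1 := summable_pow_mul_geometric_of_norm_lt_one 1 (r := r)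
    (by rwa [Real.norm_of_nonneg hr0])
  have h2 := summable_geometric_of_lt_one hr0 hr
  exact ((h1.add h2).mul_left (2 * C)).congr fun n => by ring

lemma hasDerivAt_holo (c : ℕ → ℂ) (C : ℝ) (hC : ∀ n, ‖c n‖ ≤ C) (z : ℂ) (hz : ‖z‖ < 1) :
    HasDerivAt (holo c) (holoD c z) z := by
  obtain ⟨r, hzr, hr⟩ := exists_between hz
  have hr0 : 0 ≤ r := (norm_nonneg z).trans hzr.le
  have hC0 : 0 ≤ C := (norm_nonneg _).trans (hC 0)
  apply HasDerivAt.const_add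
  unfold holoD
  apply hasDerivAt_tsum_of_isPreconnected (g := fun n z => 2 * c (n + 1) * z ^ (n + 1))
    (g' := fun n z => 2 * (n + 1) * c (n + 1) * z ^ n) (t := Metric.ball 0 r) (summable_aux hr0 hr C)
    Metric.isOpen_ball (convex_ball _ _).isPreconnected (y₀ := 0)
  · intro n y _
    have := (hasDerivAt_pow (n + 1) y).const_mul (2 * c (n + 1))
    refine this.congr_deriv ?_
    push_cast; ring
  · intro n y hy
    have hy' : ‖y‖ ≤ r := by simpa using (Metric.mem_ball.1 hy).le
    have e : ‖(n : ℂ) + 1‖ = n + 1 := by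
      have := Complex.norm_natCast (n + 1); push_cast at this; exact this
    rw [norm_mul, norm_mul, norm_mul, norm_pow, e, Complex.norm_two]
    gcongr
    exact hC _
  · simpa using (norm_nonneg z).trans_lt hzr
  · simp
  · simpa using hzr

lemma norm_re_mul (a : ℂ) (L : ℂ →L[ℝ] ℝ) (hL : ∀ v, L v = (a * v).re) : ‖L‖ = ‖a‖ := by
  apply le_antisymm
  · refine L.opNorm_le_bound (norm_nonneg _) fun v => ?_
    rw [hL, ← norm_mul]
    exact Complex.abs_re_le_norm _
  · rcases eq_or_ne a 0 with rfl | ha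
    · simp
    have h := L.le_opNorm (starRingEnd ℂ a)
    rw [hL, Complex.mul_conj, Complex.ofReal_re, Complex.normSq_eq_norm_sq, RCLike.norm_conj,
      Real.norm_of_nonneg (by positivity), sq] at h
    exact le_of_mul_le_mul_right h (norm_pos_iff.2 ha)

lemma poisson_kernel (z w : ℂ) (hz : ‖z‖ < 1) (hw : ‖w‖ = 1) :
    (1 - ‖z‖ ^ 2) / ‖z - w‖ ^ 2 = ((1 + z / w) / (1 - z / w)).re := by
  have hw0 : w ≠ 0 := by rintro rfl; simp at hw
  have hne : w - z ≠ 0 := by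
    intro h; rw [sub_eq_zero] at h; rw [← h, hw] at hz; exact lt_irrefl _ hz
  have e : (1 + z / w) / (1 - z / w) = (w + z) / (w - z) := by
    have : 1 - z / w ≠ 0 := by
      intro h; apply hne; field_simp at h; simpa using h
    field_simp
  have hw1 : w.re * w.re + w.im * w.im = 1 := by
    rw [← Complex.normSq_apply, Complex.normSq_eq_norm_sq, hw]; norm_num
  rw [e, norm_sub_rev, Complex.div_re, ← add_div, ← Complex.normSq_eq_norm_sq,
    ← Complex.normSq_eq_norm_sq]
  congr 1
  simp only [Complex.normSq_apply, Complex.add_re, Complex.add_im, Complex.sub_re, Complex.sub_im]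
  linear_combination -hw1

lemma hasSum_kernel (u : ℂ) (hu : ‖u‖ < 1) :
    HasSum (fun n : ℕ => 2 * u ^ (n + 1)) ((1 + u) / (1 - u) - 1) := by
  have h := (hasSum_geometric_of_norm_lt_one hu).mul_left (2 * u)
  have hne : 1 - u ≠ 0 := by
    intro h; rw [sub_eq_zero] at h; rw [← h] at hu; simp at hu
  have e1 : (1 + u) / (1 - u) - 1 = 2 * u * (1 - u)⁻¹ := by
    rw [eq_mul_inv_iff_mul_eq₀ hne, sub_mul, div_mul_cancel₀ _ hne]; ring
  have e2 : (fun n : ℕ => 2 * u ^ (n + 1)) = fun n => 2 * u * u ^ n := by ext n; ring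
  rw [e1, e2]
  exact h

lemma poisson_eq (f : ℝ → ℝ) (hf : Continuous f) (C : ℝ) (hC : ∀ x, ‖((f x : ℝ) : ℂ)‖ ≤ C)
    (z : ℂ) (hz : ‖z‖ < 1) :
    poissonExtension f z = (holo (fun n => cf (fun x => (f x : ℂ)) n) z).re := by
  have hC0 : 0 ≤ C := (norm_nonneg _).trans (hC 0)
  have hs : HasSum (fun n : ℕ => ∫ θ in (0 : ℝ)..(2 * π),
        2 * (z / Complex.exp (θ * Complex.I)) ^ (n + 1) * (f θ : ℂ))
      (∫ θ in (0 : ℝ)..(2 * π), ((1 + z / Complex.exp (θ * Complex.I)) /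
        (1 - z / Complex.exp (θ * Complex.I)) - 1) * (f θ : ℂ)) := by
    have hn : ∀ θ : ℝ, ‖z / Complex.exp (θ * Complex.I)‖ = ‖z‖ := by
      intro θ; rw [norm_div, Complex.norm_exp_ofReal_mul_I, div_one]
    apply intervalIntegral.hasSum_integral_of_dominated_convergence
      (fun k _ => 2 * ‖z‖ ^ (k + 1) * C)
    · intro k
      apply Continuous.aestronglyMeasurable
      have : ∀ θ : ℝ, Complex.exp (θ * Complex.I) ≠ 0 := fun θ => Complex.exp_ne_zero _
      fun_prop (disch := assumption)
    · intro k
      refine Filter.Eventually.of_forall fun θ _ => ?_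
      rw [norm_mul, norm_mul, norm_pow, hn, Complex.norm_two]
      gcongr
      exact hC _
    · refine Filter.Eventually.of_forall fun θ _ => ?_
      have := (summable_geometric_of_lt_one (norm_nonneg z) hz).mul_left (2 * ‖z‖ * C)
      exact this.congr fun n => by ring
    · exact intervalIntegrable_const
    · refine Filter.Eventually.of_forall fun θ _ => ?_
      apply HasSum.mul_right
      exact hasSum_kernel _ (by rw [hn]; exact hz)
  have e1 : ∀ n : ℕ, ((1 / (2 * π) : ℝ) : ℂ) * ∫ θ in (0 : ℝ)..(2 * π),
        2 * (z / Complex.exp (θ * Complex.I)) ^ (n + 1) * (f θ : ℂ)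
      = 2 * cf (fun x => (f x : ℂ)) ((n + 1 : ℕ) : ℤ) * z ^ (n + 1) := by
    intro n
    have : ∀ θ : ℝ, 2 * (z / Complex.exp (θ * Complex.I)) ^ (n + 1) * (f θ : ℂ)
        = 2 * z ^ (n + 1) *
          (Complex.exp (-((((n + 1 : ℕ) : ℤ) : ℂ) * θ * Complex.I)) * (f θ : ℂ)) := by
      intro θ
      rw [div_pow, ← Complex.exp_nat_mul, Complex.exp_neg]
      push_cast
      rw [div_eq_mul_inv, mul_assoc (_ + _) (θ : ℂ)]
      ring
    simp_rw [this]
    rw [intervalIntegral.integral_const_mul, cf]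
    ring
  have hs2 := hs.mul_left ((1 / (2 * π) : ℝ) : ℂ)
  simp_rw [e1] at hs2
  have hne : ∀ θ : ℝ, 1 - z / Complex.exp (θ * Complex.I) ≠ 0 := by
    intro θ h
    rw [sub_eq_zero] at h
    have : ‖z / Complex.exp (θ * Complex.I)‖ = ‖z‖ := by
      rw [norm_div, Complex.norm_exp_ofReal_mul_I, div_one]
    rw [← h] at this; simp at this; linarith
  have hcont : Continuous fun θ : ℝ => (1 + z / Complex.exp (θ * Complex.I)) /
        (1 - z / Complex.exp (θ * Complex.I)) * (f θ : ℂ) := by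
    have : ∀ θ : ℝ, Complex.exp (θ * Complex.I) ≠ 0 := fun θ => Complex.exp_ne_zero _
    fun_prop (disch := assumption)
  have hcf : Continuous fun θ : ℝ => (f θ : ℂ) := by fun_prop
  have e2 : holo (fun n => cf (fun x => (f x : ℂ)) n) z = ((1 / (2 * π) : ℝ) : ℂ) *
      ∫ θ in (0 : ℝ)..(2 * π), (1 + z / Complex.exp (θ * Complex.I)) /
        (1 - z / Complex.exp (θ * Complex.I)) * (f θ : ℂ) := by
    rw [holo, hs2.tsum_eq]
    simp_rw [sub_mul]
    rw [intervalIntegral.integral_sub (hcont.intervalIntegrable _ _)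
      ((hcf.intervalIntegrable _ _).const_mul 1), cf]
    simp
    ring
  rw [e2, Complex.re_ofReal_mul, poissonExtension]
  refine congrArg _ ?_
  have := (Complex.reCLM.intervalIntegral_comp_comm (μ := volume) (hcont.intervalIntegrable 0 (2 * π)))
  simp only [Complex.reCLM_apply] at this
  rw [← this]
  apply intervalIntegral.integral_congr
  intro θ _
  simp only
  rw [poisson_kernel z _ hz (Complex.norm_exp_ofReal_mul_I θ), Complex.re_mul_ofReal]

lemma norm_fderiv_poisson (f : ℝ → ℝ) (hf : Continuous f) (C : ℝ)
    (hC : ∀ x, ‖((f x : ℝ) : ℂ)‖ ≤ C) (z : ℂ) (hz : ‖z‖ < 1) :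
    ‖fderiv ℝ (poissonExtension f) z‖ = ‖holoD (fun n => cf (fun x => (f x : ℂ)) n) z‖ := by
  have h := hasDerivAt_holo (fun n => cf (fun x => (f x : ℂ)) n) C (fun n => cf_bound _ C hC _) z hz
  have h2 := Complex.reCLM.hasFDerivAt.comp z (h.hasFDerivAt.restrictScalars ℝ)
  have h3 : HasFDerivAt (poissonExtension f) _ z := h2.congr_of_eventuallyEq (by
    filter_upwards [Metric.isOpen_ball.mem_nhds (show z ∈ Metric.ball (0 : ℂ) 1 by simpa using hz)]
      with y hy
    exact poisson_eq f hf C hC y (by simpa using hy))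
  rw [h3.fderiv]
  apply norm_re_mul
  intro v
  simp [mul_comm]

lemma lintegral_pow_Ioo (k : ℕ) :
    ∫⁻ r in Set.Ioo (0 : ℝ) 1, ENNReal.ofReal (r ^ k) = ENNReal.ofReal (1 / (k + 1)) := by
  rw [setLIntegral_congr Ioo_ae_eq_Ioc, ← ofReal_integral_eq_lintegral_ofReal,
    ← intervalIntegral.integral_of_le zero_le_one, integral_pow]
  · simp
  · exact ((continuous_pow k).integrableOn_Icc).mono_set Set.Ioc_subset_Icc_self
  · filter_upwards [ae_restrict_mem measurableSet_Ioc] with r hr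
    exact pow_nonneg hr.1.le _

lemma circle_integral (c : ℕ → ℂ) (C : ℝ) (hC : ∀ n, ‖c n‖ ≤ C) (r : ℝ) (hr0 : 0 < r)
    (hr : r < 1) :
    ∫⁻ θ in Set.Ioo (-π) π, ENNReal.ofReal (‖holoD c (r * Complex.exp (θ * Complex.I))‖ ^ 2)
      = ENNReal.ofReal (2 * π) *
        ∑' k : ℕ, ENNReal.ofReal (4 * (k + 1) ^ 2 * ‖c (k + 1)‖ ^ 2 * r ^ (2 * k)) := by
  have hp : Function.Periodic (fun θ : ℝ =>
      ENNReal.ofReal (‖holoD c (r * Complex.exp (θ * Complex.I))‖ ^ 2)) (2 * π) := by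
    intro θ
    have : Complex.exp ((θ + 2 * π : ℝ) * Complex.I) = Complex.exp (θ * Complex.I) := by
      push_cast
      rw [add_mul, Complex.exp_periodic]
    simp only [this]
  have h1 := lintegral_periodic _ Real.two_pi_pos hp (-π) 0
  rw [setLIntegral_congr Ioo_ae_eq_Ioc]
  rw [show -π + 2 * π = π by ring, zero_add] at h1
  rw [h1]
  have e : ∀ n : ℕ, ‖(n : ℂ) + 1‖ = n + 1 := by
    intro n
    have := Complex.norm_natCast (n + 1); push_cast at this; exact this
  have hn : ∀ k : ℕ, ‖2 * (k + 1) * c (k + 1) * (r : ℂ) ^ k‖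
      = 2 * (k + 1) * ‖c (k + 1)‖ * r ^ k := by
    intro k
    rw [norm_mul, norm_mul, norm_mul, norm_pow, e, Complex.norm_two, Complex.norm_real,
      Real.norm_of_nonneg hr0.le]
  have h2 := parseval_series (fun k => 2 * (k + 1) * c (k + 1) * (r : ℂ) ^ k) (by
    simp_rw [hn]
    refine Summable.of_nonneg_of_le (fun k => by positivity) (fun k => ?_)
      (summable_aux hr0.le hr C)
    gcongr
    exact hC _)
  convert h2 using 1
  · apply lintegral_congr
    intro θ
    rw [holoD]
    congr 4
    ext k
    rw [mul_pow, ← Complex.exp_nat_mul]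
    ring_nf
  · congr 1
    apply tsum_congr
    intro k
    rw [hn]
    congr 1
    ring

lemma dirichlet_side (f : ℝ → ℝ) (hf : Continuous f) (hper : Function.Periodic f (2 * π)) :
    ∫⁻ x in Metric.ball (0 : ℂ) 1, ENNReal.ofReal (‖fderiv ℝ (poissonExtension f) x‖ ^ 2)
      = ENNReal.ofReal (4 * π) * ∑' k : ℕ, ENNReal.ofReal
          ((k + 1) * ‖cf (fun x => (f x : ℂ)) ((k + 1 : ℕ) : ℤ)‖ ^ 2) := by
  obtain ⟨C, hC⟩ := exists_bound f hf hper
  set c : ℕ → ℂ := fun n => cf (fun x => (f x : ℂ)) n with hc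
  set G : ℂ → ℝ≥0∞ := fun x => ENNReal.ofReal (‖fderiv ℝ (poissonExtension f) x‖ ^ 2) with hG
  have hGm : Measurable G := by
    have := measurable_fderiv ℝ (poissonExtension f)
    fun_prop
  have hpol : ∀ r θ : ℝ, Complex.polarCoord.symm (r, θ) = r * Complex.exp (θ * Complex.I) := by
    intro r θ
    rw [Complex.polarCoord_symm_apply, Complex.exp_mul_I]
    simp
  rw [← lintegral_indicator Metric.isOpen_ball.measurableSet,
    ← Complex.lintegral_comp_polarCoord_symm, polarCoord_target, Measure.volume_eq_prod,
    ← Measure.prod_restrict, lintegral_prod]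
  swap
  · apply Measurable.aemeasurable
    have h1 : Measurable (Set.indicator (Metric.ball (0 : ℂ) 1) G) :=
      hGm.indicator Metric.isOpen_ball.measurableSet
    have h2 : Measurable fun p : ℝ × ℝ => Complex.polarCoord.symm p := by
      have : (fun p : ℝ × ℝ => Complex.polarCoord.symm p)
          = fun p : ℝ × ℝ => (p.1 : ℂ) * Complex.exp (p.2 * Complex.I) := by
        ext p; exact hpol p.1 p.2
      rw [this]; fun_prop
    have h3 := h1.comp h2
    simp only [smul_eq_mul]
    exact (ENNReal.measurable_ofReal.comp measurable_fst).mul h3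
  have hin : ∀ r ∈ Set.Ioi (0 : ℝ), (∫⁻ θ in Set.Ioo (-π) π, ENNReal.ofReal r •
        (Metric.ball (0 : ℂ) 1).indicator G (Complex.polarCoord.symm (r, θ)))
      = (Set.Ioo (0 : ℝ) 1).indicator (fun r => ENNReal.ofReal (2 * π) * ∑' k : ℕ,
          ENNReal.ofReal (4 * (k + 1) ^ 2 * ‖c (k + 1)‖ ^ 2 * r ^ (2 * k + 1))) r := by
    intro r hr
    have hr0 : 0 < r := hr
    have hnorm : ∀ θ : ℝ, ‖(r : ℂ) * Complex.exp (θ * Complex.I)‖ = r := by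
      intro θ
      rw [norm_mul, Complex.norm_exp_ofReal_mul_I, mul_one, Complex.norm_real,
        Real.norm_of_nonneg hr0.le]
    by_cases h1 : r < 1
    · rw [Set.indicator_of_mem (show r ∈ Set.Ioo (0 : ℝ) 1 from ⟨hr0, h1⟩)]
      have : ∀ θ : ℝ, (Metric.ball (0 : ℂ) 1).indicator G (Complex.polarCoord.symm (r, θ))
          = ENNReal.ofReal (‖holoD c (r * Complex.exp (θ * Complex.I))‖ ^ 2) := by
        intro θ
        rw [hpol, Set.indicator_of_mem (by rw [mem_ball_zero_iff, hnorm]; exact h1)]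
        simp only [hG]
        rw [norm_fderiv_poisson f hf C hC _ (by rw [hnorm]; exact h1)]
      simp_rw [this, smul_eq_mul]
      rw [lintegral_const_mul' _ _ ENNReal.ofReal_ne_top,
        circle_integral c C (fun n => cf_bound _ C hC _) r hr0 h1, mul_left_comm,
        ← ENNReal.tsum_mul_left]
      congr 2
      ext k
      rw [← ENNReal.ofReal_mul hr0.le]
      congr 1
      ring
    · rw [Set.indicator_of_notMem (fun h => h1 h.2)]
      have : ∀ θ : ℝ, (Metric.ball (0 : ℂ) 1).indicator G (Complex.polarCoord.symm (r, θ)) = 0 := by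
        intro θ
        rw [hpol, Set.indicator_of_notMem (by rw [mem_ball_zero_iff, hnorm]; exact h1)]
      simp only [this, smul_zero, lintegral_zero]
  rw [setLIntegral_congr_fun measurableSet_Ioi hin, setLIntegral_indicator measurableSet_Ioo,
    Set.inter_eq_left.2 (Set.Ioo_subset_Ioi_self),
    lintegral_const_mul' _ _ ENNReal.ofReal_ne_top, lintegral_tsum (fun k => by fun_prop),
    ← ENNReal.tsum_mul_left, ← ENNReal.tsum_mul_left]
  apply tsum_congr
  intro k
  simp_rw [ENNReal.ofReal_mul (show 0 ≤ 4 * ((k : ℝ) + 1) ^ 2 * ‖c (k + 1)‖ ^ 2 by positivity)]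
  rw [lintegral_const_mul' _ _ ENNReal.ofReal_ne_top, lintegral_pow_Ioo,
    ← ENNReal.ofReal_mul (by positivity), ← ENNReal.ofReal_mul (by positivity),
    ← ENNReal.ofReal_mul (by positivity)]
  congr 1
  simp only [hc]
  push_cast
  field_simp
  ring

lemma cf_shift (f : ℝ → ℝ) (hf : Continuous f) (hper : Function.Periodic f (2 * π)) (t : ℝ)
    (n : ℤ) : cf (fun θ => (f (θ + t) : ℂ) - f θ) n
      = (Complex.exp (n * t * Complex.I) - 1) * cf (fun θ => (f θ : ℂ)) n := by
  have hp : Function.Periodic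
      (fun θ : ℝ => Complex.exp (-(n * θ * Complex.I)) * (f θ : ℂ)) (2 * π) := by
    intro θ
    have e : -((n : ℂ) * ((θ + 2 * π : ℝ) : ℂ) * Complex.I)
        = -(n * θ * Complex.I) + ((-n : ℤ) : ℂ) * (2 * π * Complex.I) := by push_cast; ring
    simp only [hper θ]
    rw [e, Complex.exp_add, Complex.exp_int_mul_two_pi_mul_I, mul_one]
  have h1 : ∫ θ in (0 : ℝ)..(2 * π), Complex.exp (-(n * θ * Complex.I)) * (f (θ + t) : ℂ)
      = Complex.exp (n * t * Complex.I) *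
        ∫ θ in (0 : ℝ)..(2 * π), Complex.exp (-(n * θ * Complex.I)) * (f θ : ℂ) := by
    have h2 := hp.intervalIntegral_add_eq t 0
    have h3 := intervalIntegral.integral_comp_add_right (a := 0) (b := 2 * π)
      (fun θ : ℝ => Complex.exp (-(n * θ * Complex.I)) * (f θ : ℂ)) t
    rw [zero_add] at h2 h3
    rw [add_comm (2 * π) t, h2] at h3
    rw [← h3, ← intervalIntegral.integral_const_mul]
    congr 1
    ext θ
    rw [← mul_assoc, ← Complex.exp_add]
    congr 2
    push_cast
    ring
  have hi1 : Continuous fun θ : ℝ => Complex.exp (-(n * θ * Complex.I)) * (f (θ + t) : ℂ) := by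
    fun_prop
  have hi2 : Continuous fun θ : ℝ => Complex.exp (-(n * θ * Complex.I)) * (f θ : ℂ) := by
    fun_prop
  simp_rw [cf, mul_sub]
  rw [intervalIntegral.integral_sub (hi1.intervalIntegrable _ _) (hi2.intervalIntegrable _ _), h1]
  ring

lemma normSq_exp_sub_one (t : ℝ) : ‖Complex.exp (t * Complex.I) - 1‖ ^ 2 = 2 * (1 - Real.cos t) := by
  rw [← Complex.normSq_eq_norm_sq, Complex.normSq_apply]
  simp only [Complex.sub_re, Complex.sub_im, Complex.exp_ofReal_mul_I_re,
    Complex.exp_ofReal_mul_I_im, Complex.one_re, Complex.one_im]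
  linear_combination Real.sin_sq_add_cos_sq t

lemma cos_lt_one_of_mem {t : ℝ} (ht : t ∈ Set.Ioo 0 (2 * π)) : Real.cos t < 1 := by
  refine lt_of_le_of_ne (Real.cos_le_one t) fun h => ?_
  rw [Real.cos_eq_one_iff_of_lt_of_lt (by linarith [ht.1, Real.pi_pos]) ht.2] at h
  exact ht.1.ne' h

lemma fejer_nat (n : ℕ) :
    ∫⁻ t in Set.Ioc 0 (2 * π),
        ENNReal.ofReal (‖Complex.exp (n * t * Complex.I) - 1‖ ^ 2 / (1 - Real.cos t))
      = ENNReal.ofReal (4 * π * n) := by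
  have h := parseval_series (fun k => if k < n then 1 else 0)
    (summable_of_ne_finset_zero (s := Finset.range n) (by
      intro k hk; simp at hk; simp [hk]))
  have e1 : ∀ t ∈ Set.Ioo 0 (2 * π),
      ENNReal.ofReal (‖Complex.exp (n * t * Complex.I) - 1‖ ^ 2 / (1 - Real.cos t))
      = ENNReal.ofReal 2 * ENNReal.ofReal (‖∑' k : ℕ, (if k < n then (1 : ℂ) else 0) *
          Complex.exp (k * t * Complex.I)‖ ^ 2) := by
    intro t ht
    have hc := cos_lt_one_of_mem ht
    have e2 : ∑' k : ℕ, (if k < n then (1 : ℂ) else 0) * Complex.exp (k * t * Complex.I)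
        = ∑ k ∈ Finset.range n, Complex.exp (t * Complex.I) ^ k := by
      rw [tsum_eq_sum (s := Finset.range n)]
      · apply Finset.sum_congr rfl
        intro k hk
        rw [if_pos (Finset.mem_range.1 hk), one_mul, ← Complex.exp_nat_mul, mul_assoc]
      · intro k hk
        rw [Finset.mem_range] at hk
        simp [hk]
    have e3 : Complex.exp (n * t * Complex.I) = Complex.exp (t * Complex.I) ^ n := by
      rw [← Complex.exp_nat_mul, mul_assoc]
    rw [← ENNReal.ofReal_mul (by norm_num), e2, e3, ← geom_sum_mul, norm_mul, mul_pow,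
      normSq_exp_sub_one]
    congr 1
    have : 1 - Real.cos t ≠ 0 := by linarith
    field_simp
  rw [setLIntegral_congr Ioo_ae_eq_Ioc.symm, setLIntegral_congr_fun measurableSet_Ioo e1,
    setLIntegral_congr Ioo_ae_eq_Ioc, lintegral_const_mul' _ _ ENNReal.ofReal_ne_top, h,
    tsum_eq_sum (s := Finset.range n)]
  · rw [Finset.sum_congr rfl (g := fun _ => (1 : ℝ≥0∞))]
    · rw [Finset.sum_const, Finset.card_range, nsmul_eq_mul, mul_one,
        ← ENNReal.ofReal_natCast, ← ENNReal.ofReal_mul (by positivity),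
        ← ENNReal.ofReal_mul (by positivity)]
      congr 1; ring
    · intro k hk
      simp [Finset.mem_range.1 hk]
  · intro k hk
    rw [Finset.mem_range] at hk
    simp [hk]

lemma fejer_neg (n : ℤ) (t : ℝ) :
    ‖Complex.exp (((-n : ℤ) : ℂ) * t * Complex.I) - 1‖ = ‖Complex.exp (n * t * Complex.I) - 1‖ := by
  have e : Complex.exp (((-n : ℤ) : ℂ) * t * Complex.I) - 1
      = -(Complex.exp (((-n : ℤ) : ℂ) * t * Complex.I) * (Complex.exp (n * t * Complex.I) - 1)) := by
    rw [mul_sub, ← Complex.exp_add]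
    push_cast
    ring_nf
    rw [Complex.exp_zero]
    ring
  rw [e, norm_neg, norm_mul, norm_exp_real, one_mul]

lemma cf_neg (f : ℝ → ℝ) (n : ℤ) :
    ‖cf (fun θ => (f θ : ℂ)) (-n)‖ = ‖cf (fun θ => (f θ : ℂ)) n‖ := by
  rw [← RCLike.norm_conj (cf (fun θ => (f θ : ℂ)) n)]
  congr 1
  rw [cf, cf, map_mul, Complex.conj_ofReal, intervalIntegral.integral_of_le Real.two_pi_pos.le,
    intervalIntegral.integral_of_le Real.two_pi_pos.le, ← integral_conj]
  congr 2
  ext θ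
  rw [map_mul, Complex.conj_ofReal, ← Complex.exp_conj]
  congr 2
  simp

lemma jump_side (f : ℝ → ℝ) (hf : Continuous f) (hper : Function.Periodic f (2 * π)) :
    ∫⁻ θ in Set.Ioc (0 : ℝ) (2 * π), ∫⁻ φ in Set.Ioc (0 : ℝ) (2 * π),
            ENNReal.ofReal ((f θ - f φ) ^ 2 / (1 - Real.cos (θ - φ)))
      = ENNReal.ofReal (16 * π ^ 2) * ∑' k : ℕ, ENNReal.ofReal
          ((k + 1) * ‖cf (fun x => (f x : ℂ)) ((k + 1 : ℕ) : ℤ)‖ ^ 2) := by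
  have h1 : ∀ θ : ℝ, ∫⁻ φ in Set.Ioc (0 : ℝ) (2 * π),
        ENNReal.ofReal ((f θ - f φ) ^ 2 / (1 - Real.cos (θ - φ)))
      = ∫⁻ t in Set.Ioc (0 : ℝ) (2 * π),
        ENNReal.ofReal ((f (θ + t) - f θ) ^ 2 / (1 - Real.cos t)) := by
    intro θ
    have hp : Function.Periodic (fun φ =>
        ENNReal.ofReal ((f θ - f φ) ^ 2 / (1 - Real.cos (θ - φ)))) (2 * π) := by
      intro φ
      simp only [hper φ, ← sub_sub, Real.cos_sub_two_pi]
    have h2 := lintegral_periodic _ Real.two_pi_pos hp 0 θ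
    rw [zero_add] at h2
    rw [h2, ← (measurePreserving_add_left volume θ).setLIntegral_comp_preimage_emb
      (measurableEmbedding_addLeft θ)]
    rw [Set.preimage_const_add_Ioc, sub_self, add_sub_cancel_left]
    apply lintegral_congr
    intro t
    rw [show θ - (θ + t) = -t by ring, Real.cos_neg, ← neg_sub (f (θ + t)), neg_sq]
  simp_rw [h1]
  rw [lintegral_lintegral_swap (by
    apply Measurable.aemeasurable
    simp only [Function.uncurry_def]
    fun_prop)]
  have h2 : ∀ t : ℝ, ∫⁻ θ in Set.Ioc (0 : ℝ) (2 * π),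
        ENNReal.ofReal ((f (θ + t) - f θ) ^ 2 / (1 - Real.cos t))
      = ∑' n : ℤ, ENNReal.ofReal (2 * π * ‖cf (fun x => (f x : ℂ)) n‖ ^ 2) *
        ENNReal.ofReal (‖Complex.exp (n * t * Complex.I) - 1‖ ^ 2 / (1 - Real.cos t)) := by
    intro t
    have hc : 0 ≤ 1 - Real.cos t := by linarith [Real.cos_le_one t]
    have h3 := parseval_lintegral (fun θ => (f (θ + t) : ℂ) - f θ) (by fun_prop)
    simp_rw [div_eq_inv_mul, ENNReal.ofReal_mul (inv_nonneg.2 hc)]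
    rw [lintegral_const_mul' _ _ ENNReal.ofReal_ne_top]
    have e : ∀ θ : ℝ, (f (θ + t) - f θ) ^ 2 = ‖(f (θ + t) : ℂ) - f θ‖ ^ 2 := by
      intro θ
      rw [← Complex.ofReal_sub, Complex.norm_real, Real.norm_eq_abs, sq_abs]
    simp_rw [e]
    rw [h3, ← ENNReal.tsum_mul_left, ← ENNReal.tsum_mul_left]
    apply tsum_congr
    intro n
    rw [cf_shift f hf hper, norm_mul, mul_pow, ENNReal.ofReal_mul (by positivity : (0 : ℝ) ≤ ‖_‖ ^ 2),
      ENNReal.ofReal_mul Real.two_pi_pos.le]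
    ring
  simp_rw [h2]
  rw [lintegral_tsum (fun n => by fun_prop)]
  have h3 : ∀ n : ℕ, ∫⁻ t in Set.Ioc (0 : ℝ) (2 * π),
      ENNReal.ofReal (2 * π * ‖cf (fun x => (f x : ℂ)) (n : ℤ)‖ ^ 2) *
        ENNReal.ofReal (‖Complex.exp (((n : ℤ) : ℂ) * t * Complex.I) - 1‖ ^ 2 / (1 - Real.cos t))
      = ENNReal.ofReal (8 * π ^ 2) * ENNReal.ofReal
        (n * ‖cf (fun x => (f x : ℂ)) (n : ℤ)‖ ^ 2) := by
    intro n
    rw [lintegral_const_mul' _ _ ENNReal.ofReal_ne_top]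
    simp only [Int.cast_natCast]
    rw [fejer_nat, ← ENNReal.ofReal_mul (by positivity), ← ENNReal.ofReal_mul (by positivity)]
    congr 1
    ring
  rw [tsum_of_nat_of_neg_add_one ENNReal.summable ENNReal.summable]
  have h4 : ∀ n : ℕ, -((n : ℤ) + 1) = -((n + 1 : ℕ) : ℤ) := by intro n; push_cast; rfl
  simp_rw [h4, cf_neg, fejer_neg, h3]
  rw [ENNReal.tsum_mul_left, ENNReal.tsum_mul_left, tsum_eq_zero_add' ENNReal.summable]
  simp only [Nat.cast_zero, zero_mul, ENNReal.ofReal_zero, zero_add]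
  rw [← two_mul, ← mul_assoc]
  congr 1
  · rw [← ENNReal.ofReal_ofNat 2, ← ENNReal.ofReal_mul (by norm_num)]
    congr 1; ring
  · push_cast
    rfl

/-- (Douglas formula.)  Let `f : ℝ → ℝ` be continuous and `2π`-periodic,
regarded as a function on the boundary of the unit disk `D`, and let `Hf` be its harmonic
(Poisson) extension to `D`.  Then, as an equality in `[0,∞]`,
`(1/2) ∫_D ‖∇Hf(x)‖² dx = (1/8π) ∫_0^{2π} ∫_0^{2π} (f(θ) - f(φ))²/(1 - cos(θ - φ)) dθ dφ`. -/
theorem douglas_formula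
    (f : ℝ → ℝ) (hf : Continuous f) (hper : Function.Periodic f (2 * Real.pi)) :
    ENNReal.ofReal (1 / 2) *
        ∫⁻ x in Metric.ball (0 : ℂ) 1,
          ENNReal.ofReal (‖fderiv ℝ (poissonExtension f) x‖ ^ 2)
      = ENNReal.ofReal (1 / (8 * Real.pi)) *
        ∫⁻ θ in Set.Ioc (0 : ℝ) (2 * Real.pi),
          ∫⁻ φ in Set.Ioc (0 : ℝ) (2 * Real.pi),
            ENNReal.ofReal ((f θ - f φ) ^ 2 / (1 - Real.cos (θ - φ))) := by
  rw [dirichlet_side f hf hper, jump_side f hf hper, ← mul_assoc, ← mul_assoc,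
    ← ENNReal.ofReal_mul (by positivity), ← ENNReal.ofReal_mul (by positivity)]
  congr 2
  have := Real.pi_ne_zero
  field_simp
  norm_num
end
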